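/- arXiv:2003.11834 — 5 statements merged into one kernel-verified Lean document; each statement's English description precedes it below -/
import Mathlib

section
/- Let N ≥ 1 and let u₀ ∈ L¹(ℝ^N) with M = ∫_{ℝ^N} u₀(x) dx. Then the solution u(·,t) = G(·,t) * u₀ of the heat equation satisfies, for every p ∈ [1,∞], t^{(N/2)(1−1/p)} ‖u(·,t) − M·G(·,t)‖_p → 0 as t → ∞. -/
open MeasureTheory Real Filter Topology
open scoped ENNReal

noncomputable section

/-- `ℝ^N` as a Euclidean space. -/
abbrev Euc (N : ℕ) := EuclideanSpace ℝ (Fin N)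

/-- The heat kernel `G(x,t) = (4πt)^{-N/2} exp(-|x|²/(4t))` on `ℝ^N`. -/
def heatKernel (N : ℕ) (x : Euc N) (t : ℝ) : ℝ :=
  (4 * π * t) ^ (-(N : ℝ) / 2) * Real.exp (-‖x‖ ^ 2 / (4 * t))

theorem hk_scale (N : ℕ) (x : Euc N) {t : ℝ} (ht : 0 < t) :
    heatKernel N x t = t ^ (-(N : ℝ) / 2) * heatKernel N ((√t)⁻¹ • x) 1 := by
  unfold heatKernel
  rw [norm_smul, mul_pow, Real.norm_eq_abs, sq_abs, inv_pow, Real.sq_sqrt ht.le,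
    Real.mul_rpow (by positivity) ht.le, mul_one]
  have : -(t⁻¹ * ‖x‖ ^ 2) / (4 * 1) = -‖x‖ ^ 2 / (4 * t) := by field_simp
  rw [this]; ring

def hkc (N : ℕ) : ℝ := (4 * π) ^ (-(N : ℝ) / 2)

theorem hkc_pos (N : ℕ) : 0 < hkc N := by unfold hkc; positivity

theorem hk_one (N : ℕ) (x : Euc N) :
    heatKernel N x 1 = hkc N * Real.exp (-‖x‖ ^ 2 / 4) := by
  simp [heatKernel, hkc]

theorem hk_cont (N : ℕ) (t : ℝ) : Continuous fun x : Euc N => heatKernel N x t := by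
  unfold heatKernel; fun_prop

theorem hk_nonneg (N : ℕ) (x : Euc N) : 0 ≤ heatKernel N x 1 := by
  rw [hk_one]; exact mul_nonneg (hkc_pos N).le (Real.exp_pos _).le

theorem hk_le (N : ℕ) (x : Euc N) : heatKernel N x 1 ≤ hkc N := by
  rw [hk_one]
  refine mul_le_of_le_one_right (hkc_pos N).le (Real.exp_le_one_iff.2 ?_)
  have := sq_nonneg ‖x‖
  linarith

theorem gauss_lip (a b : ℝ) :
    |Real.exp (-a ^ 2 / 4) - Real.exp (-b ^ 2 / 4)| ≤ |a - b| := by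
  have hd : ∀ r : ℝ, HasDerivAt (fun r : ℝ => Real.exp (-r ^ 2 / 4))
      (Real.exp (-r ^ 2 / 4) * (-r / 2)) r := by
    intro r
    have := (((hasDerivAt_pow 2 r).neg).div_const 4).exp
    convert this using 1
    · rfl
    · change _ = Real.exp (-r ^ 2 / 4) * _
      push_cast
      ring
  have := Convex.norm_image_sub_le_of_norm_hasDerivWithin_le (s := Set.univ) (C := 1)
    (fun r _ => (hd r).hasDerivWithinAt) (fun r _ => ?_) convex_univ (Set.mem_univ b)
    (Set.mem_univ a)
  · simpa using this
  · rw [norm_mul, Real.norm_eq_abs, Real.norm_eq_abs, abs_of_pos (Real.exp_pos _)]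
    have h1 : |-r / 2| ≤ Real.exp (r ^ 2 / 4) := by
      have := Real.add_one_le_exp (r ^ 2 / 4)
      rw [abs_le]; constructor <;> nlinarith [sq_nonneg (r - 1), sq_nonneg (r + 1)]
    calc _ ≤ Real.exp (-r ^ 2 / 4) * Real.exp (r ^ 2 / 4) := by gcongr
      _ = 1 := by rw [← Real.exp_add]; ring_nf; simp

theorem hk_lip (N : ℕ) (x y : Euc N) :
    |heatKernel N x 1 - heatKernel N y 1| ≤ hkc N * ‖x - y‖ := by
  rw [hk_one, hk_one, ← mul_sub, abs_mul, abs_of_pos (hkc_pos N)]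
  have := hkc_pos N
  gcongr
  exact (gauss_lip _ _).trans (abs_norm_sub_norm_le x y)

/-- the pointwise modulus -/
def hkB (N : ℕ) (h : Euc N) : ℝ≥0∞ := min (ENNReal.ofReal (hkc N * ‖h‖)) (ENNReal.ofReal (hkc N))

/-- the L1 modulus -/
def hkA (N : ℕ) (h : Euc N) : ℝ≥0∞ := ∫⁻ x, ‖heatKernel N (x - h) 1 - heatKernel N x 1‖ₑ

theorem hkB_bound (N : ℕ) (x h : Euc N) :
    ‖heatKernel N (x - h) 1 - heatKernel N x 1‖ₑ ≤ hkB N h := by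
  rw [Real.enorm_eq_ofReal_abs]
  refine le_min (ENNReal.ofReal_le_ofReal ?_) (ENNReal.ofReal_le_ofReal ?_)
  · refine (hk_lip N _ _).trans_eq ?_
    simp
  · rw [abs_le]
    constructor <;> linarith [hk_nonneg N x, hk_nonneg N (x - h), hk_le N x, hk_le N (x - h)]

theorem gauss_int (N : ℕ) {b : ℝ} (hb : 0 < b) :
    Integrable fun x : Euc N => Real.exp (-b * ‖x‖ ^ 2) := by
  by_contra hcon
  have h1 := GaussianFourier.integral_rexp_neg_mul_sq_norm (V := Euc N) hb
  rw [integral_undef hcon] at h1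
  have : 0 < (π / b) ^ (Module.finrank ℝ (Euc N) / 2 : ℝ) := by positivity
  linarith

theorem hk_int (N : ℕ) : Integrable fun x : Euc N => heatKernel N x 1 := by
  have := (gauss_int N (b := 1 / 4) (by norm_num)).const_mul (hkc N)
  refine this.congr (ae_of_all _ fun x => ?_)
  simp only [hk_one]
  ring_nf

theorem hkA_meas (N : ℕ) : Measurable (hkA N) := by
  unfold hkA
  have : Continuous fun p : Euc N × Euc N =>
      ‖heatKernel N (p.2 - p.1) 1 - heatKernel N p.2 1‖ₑ := by
    have := hk_cont N 1
    fun_prop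
  exact Measurable.lintegral_prod_right' this.measurable

theorem hkA_bdd (N : ℕ) : ∃ K : ℝ≥0∞, K ≠ ∞ ∧ ∀ h, hkA N h ≤ K := by
  refine ⟨2 * ∫⁻ x, ‖heatKernel N x 1‖ₑ,
    ENNReal.mul_ne_top (by simp) (hk_int N).hasFiniteIntegral.ne, fun h => ?_⟩
  have hm : Measurable fun x : Euc N => ‖heatKernel N x 1‖ₑ := (hk_cont N 1).measurable.enorm
  calc hkA N h ≤ ∫⁻ x, (‖heatKernel N (x - h) 1‖ₑ + ‖heatKernel N x 1‖ₑ) :=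
        lintegral_mono fun x => enorm_sub_le
    _ = _ := by
        rw [lintegral_add_right _ hm, lintegral_sub_right_eq_self (fun x => ‖heatKernel N x 1‖ₑ) h,
          two_mul]

theorem hkA_tendsto (N : ℕ) : Tendsto (hkA N) (𝓝 0) (𝓝 0) := by
  have h0 : (0 : ℝ≥0∞) = ∫⁻ _ : Euc N, 0 := by simp
  rw [h0]
  unfold hkA
  refine tendsto_lintegral_filter_of_dominated_convergence
    (fun x : Euc N => ENNReal.ofReal
      (2 * hkc N * Real.exp 1 * Real.exp (-(1 / 8) * ‖x‖ ^ 2))) ?_ ?_ ?_ ?_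
  · refine Eventually.of_forall fun h => ?_
    have := hk_cont N 1
    exact Continuous.measurable (by fun_prop) 
  · have hb := Metric.ball_mem_nhds (0 : Euc N) one_pos
    filter_upwards [hb] with h hh
    rw [mem_ball_zero_iff] at hh
    refine ae_of_all _ fun x => ?_
    rw [Real.enorm_eq_ofReal_abs]
    refine ENNReal.ofReal_le_ofReal ?_
    have e1 : Real.exp (-‖x - h‖ ^ 2 / 4) ≤ Real.exp 1 * Real.exp (-(1 / 8) * ‖x‖ ^ 2) := by
      rw [← Real.exp_add]
      refine Real.exp_le_exp.2 ?_
      have h1 : ‖x‖ ≤ ‖x - h‖ + ‖h‖ := by simpa using norm_add_le (x - h) h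
      nlinarith [norm_nonneg x, norm_nonneg h, norm_nonneg (x - h), sq_nonneg (‖x - h‖ - ‖h‖),
        mul_self_le_mul_self (norm_nonneg x) h1]
    have e2 : Real.exp (-‖x‖ ^ 2 / 4) ≤ Real.exp 1 * Real.exp (-(1 / 8) * ‖x‖ ^ 2) := by
      rw [← Real.exp_add]
      refine Real.exp_le_exp.2 ?_
      nlinarith [norm_nonneg x]
    have hc := hkc_pos N
    have := mul_le_mul_of_nonneg_left e1 hc.le
    have := mul_le_mul_of_nonneg_left e2 hc.le
    have := hk_nonneg N x
    have := hk_nonneg N (x - h)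
    rw [hk_one] at *
    rw [hk_one] at *
    rw [abs_le]; constructor <;> nlinarith
  · have := ((gauss_int N (b := 1 / 8) (by norm_num)).const_mul
      (2 * hkc N * Real.exp 1))
    exact (this.lintegral_lt_top).ne
  · refine ae_of_all _ fun x => ?_
    have : Continuous fun h : Euc N => ‖heatKernel N (x - h) 1 - heatKernel N x 1‖ₑ := by
      have := hk_cont N 1
      fun_prop
    simpa using this.tendsto 0

theorem hkB_tendsto (N : ℕ) : Tendsto (hkB N) (𝓝 0) (𝓝 0) := by
  have : Continuous (hkB N) := by
    unfold hkB
    exact (ENNReal.continuous_ofReal.comp (by fun_prop)).min continuous_const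
  have := this.tendsto 0
  simpa [hkB] using this

theorem hkB_meas (N : ℕ) : Measurable (hkB N) := by
  unfold hkB
  fun_prop

theorem conv_tendsto {N : ℕ} {u₀ : Euc N → ℝ} (hu : Integrable u₀) {F : Euc N → ℝ≥0∞}
    (hF : Measurable F) {K : ℝ≥0∞} (hK : K ≠ ∞) (hFK : ∀ h, F h ≤ K)
    (hF0 : Tendsto F (𝓝 0) (𝓝 0)) :
    Tendsto (fun t : ℝ => ∫⁻ y, F ((√t)⁻¹ • y) * ‖u₀ y‖ₑ) atTop (𝓝 0) := by
  have h0 : (0 : ℝ≥0∞) = ∫⁻ _ : Euc N, 0 := by simp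
  rw [h0]
  have hfin : ∫⁻ y, ‖u₀ y‖ₑ ≠ ∞ := hu.hasFiniteIntegral.ne
  have hum : AEMeasurable (fun y => ‖u₀ y‖ₑ) := hu.aestronglyMeasurable.enorm
  refine tendsto_lintegral_filter_of_dominated_convergence' (fun y => K * ‖u₀ y‖ₑ) ?_ ?_ ?_ ?_
  · refine Eventually.of_forall fun t => ?_
    exact (hF.comp (measurable_const_smul _)).aemeasurable.mul hum
  · refine Eventually.of_forall fun t => ae_of_all _ fun y => ?_
    gcongr
    exact hFK _
  · rw [lintegral_const_mul'' _ hum]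
    exact ENNReal.mul_ne_top hK hfin
  · refine ae_of_all _ fun y => ?_
    have h1 : Tendsto (fun t : ℝ => (√t)⁻¹ • y) atTop (𝓝 0) := by
      have : Tendsto (fun t : ℝ => (√t)⁻¹) atTop (𝓝 0) :=
        tendsto_inv_atTop_zero.comp Real.tendsto_sqrt_atTop
      simpa using this.smul_const y
    have h2 := hF0.comp h1
    have := ENNReal.Tendsto.mul_const (b := ‖u₀ y‖ₑ) h2 (Or.inr enorm_ne_top)
    simpa using this

def heatD (N : ℕ) (u₀ : Euc N → ℝ) (t : ℝ) (x : Euc N) : ℝ :=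
  (∫ y, heatKernel N (x - y) t * u₀ y) - (∫ y, u₀ y) * heatKernel N x t

theorem heatD_le {N : ℕ} {u₀ : Euc N → ℝ} (hu : Integrable u₀) {t : ℝ} (ht : 0 < t) (x : Euc N) :
    ‖heatD N u₀ t x‖ₑ ≤ ENNReal.ofReal (t ^ (-(N : ℝ) / 2)) *
      ∫⁻ y, ‖heatKernel N ((√t)⁻¹ • x - (√t)⁻¹ • y) 1 - heatKernel N ((√t)⁻¹ • x) 1‖ₑ
        * ‖u₀ y‖ₑ := by
  have hc := hk_cont N t
  have hi : Integrable fun y => heatKernel N (x - y) t * u₀ y := by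
    refine hu.bdd_mul (c := t ^ (-(N : ℝ) / 2) * hkc N)
      (Continuous.aestronglyMeasurable (by fun_prop)) (ae_of_all _ fun y => ?_)
    rw [hk_scale N _ ht, norm_mul, Real.norm_of_nonneg (by positivity),
      Real.norm_of_nonneg (hk_nonneg N _)]
    gcongr
    exact hk_le N _
  have h1 : heatD N u₀ t x = ∫ y, (heatKernel N (x - y) t - heatKernel N x t) * u₀ y := by
    unfold heatD
    rw [mul_comm, ← integral_const_mul, ← integral_sub hi (hu.const_mul _)]
    simp_rw [sub_mul]
  rw [h1]
  refine (enorm_integral_le_lintegral_enorm _).trans ?_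
  rw [← lintegral_const_mul' _ _ ENNReal.ofReal_ne_top]
  refine lintegral_mono fun y => le_of_eq ?_
  rw [hk_scale N _ ht, hk_scale N x ht, ← mul_sub, enorm_mul, enorm_mul, smul_sub,
    Real.enorm_of_nonneg (by positivity : 0 ≤ t ^ (-(N : ℝ) / 2)), mul_assoc]

theorem heatD_sup {N : ℕ} {u₀ : Euc N → ℝ} (hu : Integrable u₀) {t : ℝ} (ht : 0 < t) (x : Euc N) :
    ‖heatD N u₀ t x‖ₑ ≤ ENNReal.ofReal (t ^ (-(N : ℝ) / 2)) *
      ∫⁻ y, hkB N ((√t)⁻¹ • y) * ‖u₀ y‖ₑ := by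
  refine (heatD_le hu ht x).trans ?_
  gcongr
  exact hkB_bound N _ _

theorem lint_scale (N : ℕ) {f : Euc N → ℝ≥0∞} (hf : Measurable f) {t : ℝ} (ht : 0 < t) :
    ENNReal.ofReal (t ^ (-(N : ℝ) / 2)) * ∫⁻ x, f ((√t)⁻¹ • x) = ∫⁻ x, f x := by
  have hs : (√t)⁻¹ ≠ 0 := by positivity
  rw [← lintegral_map hf (measurable_const_smul _), Measure.map_addHaar_smul _ hs,
    lintegral_smul_measure, smul_eq_mul, ← mul_assoc, ← ENNReal.ofReal_mul (by positivity)]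
  have : t ^ (-(N : ℝ) / 2) * |(((√t)⁻¹) ^ Module.finrank ℝ (Euc N))⁻¹| = 1 := by
    rw [finrank_euclideanSpace_fin, inv_pow, inv_inv, abs_of_nonneg (by positivity),
      Real.sqrt_eq_rpow, ← Real.rpow_natCast, ← Real.rpow_mul ht.le, ← Real.rpow_add ht]
    ring_nf
    simp
  rw [this]; simp

theorem heatD_one {N : ℕ} {u₀ : Euc N → ℝ} (hu : Integrable u₀) {t : ℝ} (ht : 0 < t) :
    ∫⁻ x, ‖heatD N u₀ t x‖ₑ ≤ ∫⁻ y, hkA N ((√t)⁻¹ • y) * ‖u₀ y‖ₑ := by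
  refine (lintegral_mono (heatD_le hu ht)).trans ?_
  rw [lintegral_const_mul' _ _ ENNReal.ofReal_ne_top, lintegral_lintegral_swap,
    ← lintegral_const_mul' _ _ ENNReal.ofReal_ne_top]
  · refine lintegral_mono fun y => le_of_eq ?_
    rw [lintegral_mul_const' _ _ enorm_ne_top, ← mul_assoc]
    congr 1
    have := hk_cont N 1
    exact lint_scale N (f := fun x => ‖heatKernel N (x - (√t)⁻¹ • y) 1 - heatKernel N x 1‖ₑ)
      (Continuous.measurable (by fun_prop)) ht
  · have h1 : AEMeasurable (fun z : Euc N × Euc N => ‖heatKernel N ((√t)⁻¹ • z.1 - (√t)⁻¹ • z.2) 1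
        - heatKernel N ((√t)⁻¹ • z.1) 1‖ₑ) (volume.prod volume) := by
      have := hk_cont N 1
      exact (Continuous.measurable (by fun_prop)).aemeasurable
    have h2 : AEMeasurable (fun z : Euc N × Euc N => ‖u₀ z.2‖ₑ) (volume.prod volume) :=
      (hu.aestronglyMeasurable.comp_snd).enorm
    exact h1.mul h2

theorem stmt0 (N : ℕ) (hN : 1 ≤ N) (u₀ : Euc N → ℝ) (hu₀ : Integrable u₀)
    (M : ℝ) (hM : M = ∫ x, u₀ x) :
    ∀ p : ℝ≥0∞, 1 ≤ p →
      Tendsto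
        (fun t : ℝ =>
          ENNReal.ofReal (t ^ (((N : ℝ) / 2) * (1 - 1 / p.toReal))) *
            eLpNorm
              (fun x => (∫ y, heatKernel N (x - y) t * u₀ y) - M * heatKernel N x t)
              p volume)
        atTop (𝓝 0) := by
  subst hM
  intro p hp
  obtain ⟨K, hK, hAK⟩ := hkA_bdd N
  have hA := conv_tendsto hu₀ (hkA_meas N) hK hAK (hkA_tendsto N)
  have hB := conv_tendsto hu₀ (hkB_meas N) (K := ENNReal.ofReal (hkc N)) ENNReal.ofReal_ne_top
    (fun h => min_le_right _ _) (hkB_tendsto N)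
  by_cases hpt : p = ∞
  · subst hpt
    refine tendsto_of_tendsto_of_tendsto_of_le_of_le' tendsto_const_nhds hB
      (Eventually.of_forall fun _ => zero_le) ?_
    filter_upwards [eventually_gt_atTop 0] with t ht
    have h1 : eLpNorm (heatD N u₀ t) ∞ volume ≤ _ :=
      eLpNormEssSup_le_of_ae_enorm_bound (ae_of_all _ (heatD_sup hu₀ ht))
    refine (mul_le_mul_right h1 _).trans_eq ?_
    rw [← mul_assoc, ← ENNReal.ofReal_mul (by positivity), ← Real.rpow_add ht]
    simp only [ENNReal.toReal_top]
    ring_nf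
    simp
  · have hp0 : p ≠ 0 := (zero_lt_one.trans_le hp).ne'
    set q := p.toReal with hq
    have hq1 : 1 ≤ q := by
      rw [hq, ← ENNReal.toReal_one]
      exact ENNReal.toReal_mono hpt hp
    have hq0 : 0 < q := by linarith
    have hA' := (ENNReal.continuous_rpow_const (y := 1 / q)).tendsto 0 |>.comp hA
    rw [ENNReal.zero_rpow_of_pos (by positivity)] at hA'
    refine tendsto_of_tendsto_of_tendsto_of_le_of_le' tendsto_const_nhds hA'
      (Eventually.of_forall fun _ => zero_le) ?_
    filter_upwards [eventually_gt_atTop 0, hB.eventually (ge_mem_nhds one_pos)] with t ht hB1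
    have hsup : ∀ x, ‖heatD N u₀ t x‖ₑ ≤ ENNReal.ofReal (t ^ (-(N : ℝ) / 2)) := fun x =>
      (heatD_sup hu₀ ht x).trans (mul_le_of_le_one_right' hB1)
    change _ * eLpNorm (heatD N u₀ t) p volume ≤ _
    rw [eLpNorm_eq_lintegral_rpow_enorm_toReal hp0 hpt]
    have h2 : ∫⁻ x, ‖heatD N u₀ t x‖ₑ ^ q ≤
        ENNReal.ofReal (t ^ (-(N : ℝ) / 2)) ^ (q - 1) *
          ∫⁻ y, hkA N ((√t)⁻¹ • y) * ‖u₀ y‖ₑ := by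
      calc _ ≤ ∫⁻ x, ENNReal.ofReal (t ^ (-(N : ℝ) / 2)) ^ (q - 1) * ‖heatD N u₀ t x‖ₑ := by
            refine lintegral_mono fun x => ?_
            have : ‖heatD N u₀ t x‖ₑ ^ q = ‖heatD N u₀ t x‖ₑ ^ (q - 1) * ‖heatD N u₀ t x‖ₑ := by
              conv_rhs => rw [← ENNReal.rpow_one ‖heatD N u₀ t x‖ₑ, ← ENNReal.rpow_mul, one_mul,
                ← ENNReal.rpow_add_of_nonneg _ _ (by linarith) zero_le_one, sub_add_cancel]
            simp only
            rw [this]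
            gcongr
            exact hsup x
        _ ≤ _ := by
            rw [lintegral_const_mul' _ _ (by finiteness)]
            exact mul_le_mul_right (heatD_one hu₀ ht) _
    have h3 := ENNReal.rpow_le_rpow h2 (by positivity : 0 ≤ 1 / q)
    refine (mul_le_mul_right h3 _).trans_eq ?_
    rw [ENNReal.mul_rpow_of_nonneg _ _ (by positivity), ← mul_assoc,
      ENNReal.ofReal_rpow_of_pos (by positivity), ENNReal.ofReal_rpow_of_pos (by positivity),
      ← ENNReal.ofReal_mul (by positivity), ← Real.rpow_mul ht.le, ← Real.rpow_mul ht.le,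
      ← Real.rpow_add ht]
    have : (N : ℝ) / 2 * (1 - 1 / q) + -(N : ℝ) / 2 * (q - 1) * (1 / q) = 0 := by
      field_simp; ring
    rw [this]
    simp
end
end

section
/- Let N ≥ 1 and p ∈ [1,∞]. There exists a constant C_p > 0, depending only on p and N, such that for every φ ∈ L¹(ℝ^N) with ∫_{ℝ^N} |x| |φ(x)| dx < ∞ and ∫_{ℝ^N} φ(x) dx = 0, one has ‖G(·,t) * φ‖_p ≤ C_p · t^{−(N/2)(1−1/p)−1/2} · ∫_{ℝ^N} |x||φ(x)| dx for all t > 0. -/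
open MeasureTheory Real Filter Topology
open scoped ENNReal

noncomputable section

lemma exp_half_lip (a b : ℝ) :
    |Real.exp (-a ^ 2 / 2) - Real.exp (-b ^ 2 / 2)| ≤ |a - b| := by
  have hd : ∀ x ∈ (Set.univ : Set ℝ), HasDerivWithinAt (fun s : ℝ => Real.exp (-s ^ 2 / 2))
      (Real.exp (-x ^ 2 / 2) * (-x)) Set.univ x := by
    intro x _
    have h1 : HasDerivAt (fun s : ℝ => -s ^ 2 / 2) (-x) x := by
      have := ((hasDerivAt_pow 2 x).neg).div_const 2
      refine this.congr_deriv ?_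
      norm_num
      ring
    exact h1.exp.hasDerivWithinAt
  have hb : ∀ x ∈ (Set.univ : Set ℝ), ‖Real.exp (-x ^ 2 / 2) * (-x)‖ ≤ 1 := by
    intro x _
    rw [norm_mul, norm_neg, Real.norm_eq_abs, Real.norm_eq_abs, abs_of_pos (Real.exp_pos _)]
    have h2 : |x| ≤ Real.exp (x ^ 2 / 2) := by
      have h3 := Real.add_one_le_exp (x ^ 2 / 2)
      have h4 : |x| ≤ x ^ 2 / 2 + 1 := by
        rw [← sq_abs]; nlinarith [sq_nonneg (|x| - 1)]
      linarith
    calc Real.exp (-x ^ 2 / 2) * |x| ≤ Real.exp (-x ^ 2 / 2) * Real.exp (x ^ 2 / 2) := by gcongr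
      _ = 1 := by rw [← Real.exp_add]; ring_nf; simp
  have := Convex.norm_image_sub_le_of_norm_hasDerivWithin_le hd hb convex_univ
    (Set.mem_univ b) (Set.mem_univ a)
  simpa [Real.norm_eq_abs] using this

lemma exp_diff (a b : ℝ) :
    |Real.exp (-a ^ 2) - Real.exp (-b ^ 2)| ≤
      |a - b| * (Real.exp (-a ^ 2 / 2) + Real.exp (-b ^ 2 / 2)) := by
  have h : ∀ c : ℝ, Real.exp (-c ^ 2) = Real.exp (-c ^ 2 / 2) * Real.exp (-c ^ 2 / 2) := by
    intro c; rw [← Real.exp_add]; ring_nf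
  have e : Real.exp (-a ^ 2) - Real.exp (-b ^ 2) =
      (Real.exp (-a ^ 2 / 2) - Real.exp (-b ^ 2 / 2)) *
        (Real.exp (-a ^ 2 / 2) + Real.exp (-b ^ 2 / 2)) := by
    rw [h a, h b]; ring
  rw [e, abs_mul, abs_of_pos (a := Real.exp (-a ^ 2 / 2) + Real.exp (-b ^ 2 / 2)) (by positivity)]
  exact mul_le_mul_of_nonneg_right (exp_half_lip a b) (by positivity)

lemma heat_diff (N : ℕ) (x y : Euc N) (t : ℝ) (ht : 0 < t) :
    |heatKernel N (x - y) t - heatKernel N x t| ≤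
      ((4 * π * t) ^ (-(N : ℝ) / 2) * (1 / (2 * √t))) * (‖y‖ *
        (Real.exp (-(1 / (8 * t)) * ‖x - y‖ ^ 2) + Real.exp (-(1 / (8 * t)) * ‖x‖ ^ 2))) := by
  have hs : 0 < √t := Real.sqrt_pos.2 ht
  have hst : √t ^ 2 = t := Real.sq_sqrt ht.le
  have key := exp_diff (‖x - y‖ / (2 * √t)) (‖x‖ / (2 * √t))
  have e1 : ∀ r : ℝ, -(r / (2 * √t)) ^ 2 = -r ^ 2 / (4 * t) := by
    intro r; rw [div_pow, mul_pow, hst]; ring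
  have e2 : ∀ r : ℝ, -r ^ 2 / (4 * t) / 2 = -(1 / (8 * t)) * r ^ 2 := by
    intro r; field_simp; ring
  rw [e1, e1, e2, e2] at key
  have hn : |‖x - y‖ / (2 * √t) - ‖x‖ / (2 * √t)| ≤ ‖y‖ * (1 / (2 * √t)) := by
    rw [← sub_div, abs_div, abs_of_pos (a := 2 * √t) (by positivity), div_eq_mul_one_div]
    gcongr
    have := abs_norm_sub_norm_le (x - y) x
    simpa using this
  unfold heatKernel
  rw [← mul_sub, abs_mul, abs_of_nonneg (a := (4 * π * t) ^ (-(N : ℝ) / 2)) (by positivity)]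
  calc _ ≤ (4 * π * t) ^ (-(N : ℝ) / 2) * ((‖y‖ * (1 / (2 * √t))) *
        (Real.exp (-(1 / (8 * t)) * ‖x - y‖ ^ 2) + Real.exp (-(1 / (8 * t)) * ‖x‖ ^ 2))) := by
        gcongr
        exact key.trans (by gcongr)
    _ = _ := by ring

/-- Interpolation between the sup norm and the `L^1` norm. -/
lemma interp {α : Type*} [MeasurableSpace α] (μ : Measure α) (F : α → ℝ) (B S p : ℝ≥0∞)
    (hp : 1 ≤ p) (hBt : B ≠ ∞) (hB : ∀ x, ‖F x‖ₑ ≤ B) (hS : ∫⁻ x, ‖F x‖ₑ ∂μ ≤ B * S) :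
    eLpNorm F p μ ≤ B * S ^ (1 / p.toReal) := by
  rcases eq_or_ne p ∞ with rfl | hpt
  · simp only [ENNReal.toReal_top, div_zero, ENNReal.rpow_zero, mul_one, eLpNorm_exponent_top]
    exact eLpNormEssSup_le_of_ae_enorm_bound (Eventually.of_forall hB)
  have hp0 : p ≠ 0 := (zero_lt_one.trans_le hp).ne'
  have hr : 1 ≤ p.toReal := by
    rw [← ENNReal.toReal_one]; exact ENNReal.toReal_mono hpt hp
  rw [eLpNorm_eq_lintegral_rpow_enorm_toReal hp0 hpt]
  set r := p.toReal
  have hsplit : ∀ c : ℝ≥0∞, c ^ r = c ^ (r - 1) * c := by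
    intro c
    conv_rhs => rw [← ENNReal.rpow_one c, ← ENNReal.rpow_mul]
    rw [← ENNReal.rpow_add_of_nonneg _ _ (by linarith) (by linarith)]
    congr 1; ring
  have h1 : ∫⁻ x, ‖F x‖ₑ ^ r ∂μ ≤ B ^ r * S := by
    calc ∫⁻ x, ‖F x‖ₑ ^ r ∂μ ≤ ∫⁻ x, B ^ (r - 1) * ‖F x‖ₑ ∂μ := by
          refine lintegral_mono fun x => ?_
          simp only [hsplit]
          gcongr
          exact hB x
      _ = B ^ (r - 1) * ∫⁻ x, ‖F x‖ₑ ∂μ :=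
          lintegral_const_mul' _ _ (ENNReal.rpow_ne_top_of_nonneg (by linarith) hBt)
      _ ≤ B ^ (r - 1) * (B * S) := by gcongr
      _ = B ^ r * S := by rw [hsplit B, mul_assoc]
  calc _ ≤ (B ^ r * S) ^ (1 / r) := by gcongr
    _ = B * S ^ (1 / r) := by
      rw [ENNReal.mul_rpow_of_nonneg _ _ (by positivity), ← ENNReal.rpow_mul,
        mul_one_div_cancel (by linarith), ENNReal.rpow_one]

lemma gauss_lint (N : ℕ) (t : ℝ) (ht : 0 < t) :
    ∫⁻ x : Euc N, ENNReal.ofReal (Real.exp (-(1 / (8 * t)) * ‖x‖ ^ 2)) =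
      ENNReal.ofReal ((8 * π * t) ^ ((N : ℝ) / 2)) := by
  have hb : 0 < 1 / (8 * t) := by positivity
  have h := GaussianFourier.integral_rexp_neg_mul_sq_norm (V := Euc N) hb
  have hpos : 0 < (8 * π * t) ^ ((N : ℝ) / 2) := by positivity
  have e : (π / (1 / (8 * t))) = 8 * π * t := by field_simp
  rw [e, finrank_euclideanSpace_fin] at h
  rw [← ofReal_integral_eq_lintegral_ofReal _ (Eventually.of_forall fun x => (Real.exp_pos _).le), h]
  by_contra hc
  rw [integral_undef hc] at h
  linarith

lemma heat_bound (N : ℕ) (φ : Euc N → ℝ) (hφ : Integrable φ)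
    (h0 : (∫ x, φ x) = 0) (t : ℝ) (ht : 0 < t) (x : Euc N) :
    ‖∫ y, heatKernel N (x - y) t * φ y‖ₑ ≤
      ENNReal.ofReal ((4 * π * t) ^ (-(N : ℝ) / 2) * (1 / (2 * √t))) *
        ∫⁻ y, ENNReal.ofReal (‖y‖ * |φ y|) *
          (ENNReal.ofReal (Real.exp (-(1 / (8 * t)) * ‖x - y‖ ^ 2)) +
            ENNReal.ofReal (Real.exp (-(1 / (8 * t)) * ‖x‖ ^ 2))) := by
  have hi : Integrable (fun y => heatKernel N (x - y) t * φ y) := by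
    refine hφ.bdd_mul (c := (4 * π * t) ^ (-(N : ℝ) / 2)) ?_ (Eventually.of_forall fun y => ?_)
    · refine Continuous.aestronglyMeasurable ?_
      unfold heatKernel
      fun_prop
    · unfold heatKernel
      rw [Real.norm_eq_abs, abs_of_nonneg (by positivity)]
      refine mul_le_of_le_one_right (by positivity) (Real.exp_le_one_iff.2 ?_)
      exact div_nonpos_of_nonpos_of_nonneg (by nlinarith [sq_nonneg ‖x - y‖]) (by positivity)
  have e : ∫ y, heatKernel N (x - y) t * φ y =
      ∫ y, (heatKernel N (x - y) t - heatKernel N x t) * φ y := by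
    simp only [sub_mul]
    rw [integral_sub hi (hφ.const_mul _), integral_const_mul, h0]
    simp
  rw [e]
  refine (enorm_integral_le_lintegral_enorm _).trans ?_
  rw [← lintegral_const_mul' _ _ ENNReal.ofReal_ne_top]
  refine lintegral_mono fun y => ?_
  rw [← ENNReal.ofReal_add (Real.exp_pos _).le (Real.exp_pos _).le,
    ← ENNReal.ofReal_mul (by positivity), ← ENNReal.ofReal_mul (by positivity),
    Real.enorm_eq_ofReal_abs, abs_mul]
  refine ENNReal.ofReal_le_ofReal ?_
  calc _ ≤ _ * |φ y| := mul_le_mul_of_nonneg_right (heat_diff N x y t ht) (abs_nonneg _)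
    _ = _ := by ring

/-- For every `p ∈ [1,∞]` there is a constant `C_p > 0`
(depending only on `p` and `N`) such that for every `φ ∈ L¹(ℝ^N; 1+|x|)` of zero mean,
`‖G(·,t) * φ‖_p ≤ C_p t^{-(N/2)(1-1/p)-1/2} ∫ |x||φ(x)| dx` for all `t > 0`. -/
theorem stmt1 (N : ℕ) (hN : 1 ≤ N) (p : ℝ≥0∞) (hp : 1 ≤ p) :
    ∃ C : ℝ, 0 < C ∧
      ∀ φ : Euc N → ℝ, Integrable φ → Integrable (fun x => ‖x‖ * |φ x|) →
        (∫ x, φ x) = 0 →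
        ∀ t : ℝ, 0 < t →
          eLpNorm (fun x => ∫ y, heatKernel N (x - y) t * φ y) p volume ≤
            ENNReal.ofReal
              (C * t ^ (-((N : ℝ) / 2) * (1 - 1 / p.toReal) - 1 / 2) *
                ∫ x, ‖x‖ * |φ x|) := by
  refine ⟨(4 * π) ^ (-(N : ℝ) / 2) * (8 * π) ^ ((N : ℝ) / 2 * (1 / p.toReal)), by positivity, ?_⟩
  intro φ hφ hw h0 t ht
  have hbd := heat_bound N φ hφ h0 t ht
  have hG := gauss_lint N t ht
  set A := ENNReal.ofReal ((4 * π * t) ^ (-(N : ℝ) / 2) * (1 / (2 * √t))) with hA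
  set h : Euc N → ℝ≥0∞ := fun x => ENNReal.ofReal (Real.exp (-(1 / (8 * t)) * ‖x‖ ^ 2)) with hh
  set W : Euc N → ℝ≥0∞ := fun y => ENNReal.ofReal (‖y‖ * |φ y|) with hW
  change ∫⁻ x, h x = _ at hG
  replace hbd : ∀ x, ‖∫ y, heatKernel N (x - y) t * φ y‖ₑ ≤ A * ∫⁻ y, W y * (h (x - y) + h x) :=
    hbd
  have hWm : AEMeasurable W := hw.aestronglyMeasurable.aemeasurable.ennreal_ofReal
  have hhm : Measurable h := by
    refine ENNReal.measurable_ofReal.comp (Continuous.measurable ?_)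
    fun_prop
  have hh1 : ∀ x, h x ≤ 1 := by
    intro x
    rw [hh, ENNReal.ofReal_le_one, Real.exp_le_one_iff]
    have : 0 < 1 / (8 * t) := by positivity
    nlinarith [sq_nonneg ‖x‖]
  have hWi : ∫⁻ y, W y = ENNReal.ofReal (∫ x, ‖x‖ * |φ x|) :=
    (ofReal_integral_eq_lintegral_ofReal hw
      (Eventually.of_forall fun x => by positivity)).symm
  have hM : 0 ≤ ∫ x, ‖x‖ * |φ x| := integral_nonneg fun x => by positivity
  set M := ∫ x, ‖x‖ * |φ x| with hMdef
  have hsup : ∀ x, ‖∫ y, heatKernel N (x - y) t * φ y‖ₑ ≤ A * (ENNReal.ofReal M * 2) := by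
    intro x
    refine (hbd x).trans ?_
    gcongr
    rw [← hWi, ← lintegral_mul_const' _ _ (by simp)]
    refine lintegral_mono fun y => ?_
    gcongr
    exact (add_le_add (hh1 _) (hh1 _)).trans (by norm_num)
  have hL1 : ∫⁻ x, ‖∫ y, heatKernel N (x - y) t * φ y‖ₑ ≤
      (A * (ENNReal.ofReal M * 2)) * ENNReal.ofReal ((8 * π * t) ^ ((N : ℝ) / 2)) := by
    calc _ ≤ ∫⁻ x, A * ∫⁻ y, W y * (h (x - y) + h x) := lintegral_mono hbd
      _ = A * ∫⁻ x, ∫⁻ y, W y * (h (x - y) + h x) :=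
          lintegral_const_mul' _ _ ENNReal.ofReal_ne_top
      _ = A * ∫⁻ y, ∫⁻ x, W y * (h (x - y) + h x) := by
          rw [lintegral_lintegral_swap]
          have hm1 : AEMeasurable (fun z : Euc N × Euc N => W z.2)
              ((volume : Measure (Euc N)).prod volume) := hWm.comp_snd
          exact hm1.mul ((hhm.comp (measurable_fst.sub measurable_snd)).add
              (hhm.comp measurable_fst)).aemeasurable
      _ = A * ∫⁻ y, W y * (2 * ENNReal.ofReal ((8 * π * t) ^ ((N : ℝ) / 2))) := by
          congr 1
          refine lintegral_congr fun y => ?_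
          rw [lintegral_const_mul' _ _ ENNReal.ofReal_ne_top, lintegral_add_right _ hhm,
            lintegral_sub_right_eq_self h y, hG, two_mul]
      _ = _ := by
          rw [lintegral_mul_const' _ _ (ENNReal.mul_ne_top (by simp) ENNReal.ofReal_ne_top), hWi]
          ring
  have hfin : A * (ENNReal.ofReal M * 2) ≠ ∞ :=
    ENNReal.mul_ne_top ENNReal.ofReal_ne_top (ENNReal.mul_ne_top ENNReal.ofReal_ne_top (by simp))
  refine (interp volume _ _ _ p hp hfin hsup hL1).trans (le_of_eq ?_)
  have h2 : (2 : ℝ≥0∞) = ENNReal.ofReal 2 := by simp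
  have hq : 0 ≤ 1 / p.toReal := by positivity
  rw [hA, h2, ENNReal.ofReal_rpow_of_nonneg (by positivity) hq, ← ENNReal.ofReal_mul hM,
    ← ENNReal.ofReal_mul (by positivity), ← ENNReal.ofReal_mul (by positivity)]
  congr 1
  have hpi := Real.pi_pos
  generalize 1 / p.toReal = q
  have e1 : t ^ (-((N : ℝ) / 2) * (1 - q) - 1 / 2) =
      t ^ (-(N : ℝ) / 2) * t ^ ((N : ℝ) / 2 * q) * (√t)⁻¹ := by
    rw [Real.sqrt_eq_rpow, ← Real.rpow_neg ht.le, ← Real.rpow_add ht, ← Real.rpow_add ht]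
    congr 1; ring
  rw [e1, ← Real.rpow_mul (by positivity), Real.mul_rpow (by positivity) ht.le,
    Real.mul_rpow (x := 8 * π) (by positivity) ht.le]
  field_simp
end
end

section
/- Let u₀ ∈ L¹(ℝ) with M = ∫_ℝ u₀(x) dx. Define w₀(x) = exp(∫_{−∞}^x u₀(z) dz), w(·,t) = G(·,t) * w₀ where G is the one‑dimensional heat kernel, and u(x,t) = w_x(x,t)/w(x,t) (the Hopf–Cole solution of the Burgers equation u_t − u_{xx} = (u²)_x with u(·,0) = u₀). Let h(x) = (4π)^{−1/2} exp(−x²/4), f_M(x) = (e^M − 1)h(x) / ((e^M − 1)∫_{−∞}^x h(s) ds + 1), and u_M(x,t) = t^{−1/2} f_M(x/√t). Then for every p ∈ [1,∞], t^{(1/2)(1−1/p)} ‖u(·,t) − u_M(·,t)‖_p → 0 as t → ∞. -/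
open MeasureTheory Real Filter Topology
open scoped ENNReal

noncomputable section

/-- The one-dimensional heat kernel `G(x,t) = (4πt)^{-1/2} exp(-x²/(4t))`. -/
def G1 (x t : ℝ) : ℝ := (4 * π * t) ^ (-(1 : ℝ) / 2) * Real.exp (-x ^ 2 / (4 * t))

/-- The Gaussian profile `h(x) = (4π)^{-1/2} exp(-x²/4)`. -/
def gauss (x : ℝ) : ℝ := (4 * π) ^ (-(1 : ℝ) / 2) * Real.exp (-x ^ 2 / 4)

/-- The self-similar profile of mass `M` of the viscous Burgers equation. -/
def fM (M x : ℝ) : ℝ :=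
  (Real.exp M - 1) * gauss x / ((Real.exp M - 1) * (∫ s in Set.Iic x, gauss s) + 1)

/-- The self-similar solution of mass `M` of the viscous Burgers equation. -/
def uM (M x t : ℝ) : ℝ := t ^ (-(1 : ℝ) / 2) * fM M (x / Real.sqrt t)

lemma gauss_eq (x : ℝ) : gauss x = (4 * π) ^ (-(1 : ℝ) / 2) * Real.exp (-(1/4) * x ^ 2) := by
  unfold gauss; congr 2; ring

lemma gauss_cont : Continuous gauss := by
  unfold gauss; fun_prop

lemma gauss_nonneg (x : ℝ) : 0 ≤ gauss x := by
  unfold gauss; positivity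

lemma gauss_const_le : (4 * π : ℝ) ^ (-(1 : ℝ) / 2) ≤ 1 := by
  apply Real.rpow_le_one_of_one_le_of_nonpos
  · nlinarith [Real.pi_gt_three]
  · norm_num

lemma gauss_le_exp (x : ℝ) : gauss x ≤ Real.exp (-(1/4) * x ^ 2) := by
  rw [gauss_eq]
  exact mul_le_of_le_one_left (Real.exp_pos _).le gauss_const_le

lemma gauss_le_one (x : ℝ) : gauss x ≤ 1 := by
  refine (gauss_le_exp x).trans ?_
  rw [Real.exp_le_one_iff]; nlinarith [sq_nonneg x]

lemma gauss_integrable : Integrable gauss := by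
  have := (integrable_exp_neg_mul_sq (b := 1/4) (by norm_num)).const_mul ((4 * π : ℝ) ^ (-(1 : ℝ) / 2))
  exact this.congr (Eventually.of_forall fun x => (gauss_eq x).symm)

lemma gauss_integral : ∫ x, gauss x = 1 := by
  simp_rw [gauss_eq]
  rw [integral_const_mul, integral_gaussian, show π / (1/4) = 4 * π by ring, Real.sqrt_eq_rpow,
    ← Real.rpow_add (by positivity)]
  norm_num

lemma gauss_hasDeriv (x : ℝ) : HasDerivAt gauss (-(x/2) * gauss x) x := by
  have h : HasDerivAt (fun x : ℝ => -(1/4) * x ^ 2) (-(1/4) * (2 * x)) x := by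
    simpa using (hasDerivAt_pow 2 x).const_mul (-(1/4) : ℝ)
  have := (h.exp).const_mul ((4 * π : ℝ) ^ (-(1 : ℝ) / 2))
  rw [gauss_eq x]
  convert! this using 1
  · exact funext gauss_eq
  · ring

lemma gauss_lip_s3 (x y : ℝ) : |gauss x - gauss y| ≤ |x - y| := by
  have := Convex.norm_image_sub_le_of_norm_hasDerivWithin_le (f := gauss) (s := Set.univ) (C := 1)
    (f' := fun x => -(x/2) * gauss x) (x := y) (y := x) (fun x _ => (gauss_hasDeriv x).hasDerivWithinAt)
    ?_ convex_univ trivial trivial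
  · simpa using this
  · intro x _
    rw [norm_mul, Real.norm_eq_abs, Real.norm_eq_abs, abs_of_nonneg (gauss_nonneg x), abs_neg]
    have h1 := gauss_le_exp x
    have h2 : Real.exp (-(1/4) * x ^ 2) * (1 + x^2/4) ≤ 1 := by
      have := Real.add_one_le_exp (1/4 * x^2)
      calc _ ≤ Real.exp (-(1/4) * x ^ 2) * Real.exp (1/4 * x^2) := by gcongr; linarith
        _ = 1 := by rw [← Real.exp_add]; simp
    have h3 : |x/2| ≤ 1 + x^2/4 := by
      rw [abs_le]; constructor <;> nlinarith [sq_nonneg (x/2-1), sq_nonneg (x/2+1)]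
    calc |x/2| * gauss x ≤ (1 + x^2/4) * Real.exp (-(1/4) * x ^ 2) := mul_le_mul h3 h1 (gauss_nonneg x) (by positivity)
      _ ≤ 1 := by linarith

lemma gauss_diff (x y : ℝ) : |gauss x - gauss y| ≤ min 1 |x - y| := by
  refine le_min ?_ (gauss_lip_s3 x y)
  rw [abs_le]; constructor <;> linarith [gauss_nonneg x, gauss_nonneg y, gauss_le_one x, gauss_le_one y]

/-- Primitive of the Gaussian. -/
def Hf (x : ℝ) : ℝ := ∫ s in Set.Iic x, gauss s

lemma Hf_nonneg (x : ℝ) : 0 ≤ Hf x := integral_nonneg gauss_nonneg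

lemma Hf_le_one (x : ℝ) : Hf x ≤ 1 := by
  rw [← gauss_integral]
  exact setIntegral_le_integral gauss_integrable (Eventually.of_forall gauss_nonneg)

lemma Hf_sub (x y : ℝ) : Hf y - Hf x = ∫ s in x..y, gauss s :=
  intervalIntegral.integral_Iic_sub_Iic gauss_integrable.integrableOn gauss_integrable.integrableOn

lemma Hf_hasDeriv (x : ℝ) : HasDerivAt Hf (gauss x) x := by
  have h : Hf = fun y => (∫ s in (0:ℝ)..y, gauss s) + Hf 0 := by
    ext y; rw [← Hf_sub]; ring
  rw [h]
  exact (intervalIntegral.integral_hasDerivAt_right (gauss_cont.intervalIntegrable _ _)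
    (gauss_cont.stronglyMeasurableAtFilter _ _) gauss_cont.continuousAt).add_const _

lemma Hf_cont : Continuous Hf := continuous_iff_continuousAt.2 fun x => (Hf_hasDeriv x).continuousAt

lemma Hf_diff (x y : ℝ) : |Hf x - Hf y| ≤ min 1 |x - y| := by
  refine le_min ?_ ?_
  · rw [abs_le]; constructor <;> linarith [Hf_nonneg x, Hf_nonneg y, Hf_le_one x, Hf_le_one y]
  · rw [Hf_sub]
    have := intervalIntegral.norm_integral_le_of_norm_le_const (f := gauss) (a := y) (b := x) (C := 1)
      (fun s _ => by rw [Real.norm_eq_abs, abs_of_nonneg (gauss_nonneg s)]; exact gauss_le_one s)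
    simpa using this

/-! Part: the initial datum -/

lemma U_bound {u₀ : ℝ → ℝ} (hu : Integrable u₀) (x : ℝ) :
    |∫ z in Set.Iic x, u₀ z| ≤ ∫ z, |u₀ z| := by
  refine (abs_integral_le_integral_abs).trans ?_
  exact setIntegral_le_integral hu.abs (Eventually.of_forall fun _ => abs_nonneg _)

lemma U_eq {u₀ : ℝ → ℝ} (hu : Integrable u₀) (a x : ℝ) :
    ∫ z in Set.Iic x, u₀ z = (∫ z in a..x, u₀ z) + ∫ z in Set.Iic a, u₀ z := by
  rw [← intervalIntegral.integral_Iic_sub_Iic hu.integrableOn hu.integrableOn]; ring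

lemma U_cont {u₀ : ℝ → ℝ} (hu : Integrable u₀) : Continuous fun x => ∫ z in Set.Iic x, u₀ z := by
  have : (fun x => ∫ z in Set.Iic x, u₀ z) =
      fun x => (∫ z in (0:ℝ)..x, u₀ z) + ∫ z in Set.Iic 0, u₀ z := funext fun x => U_eq hu 0 x
  rw [this]
  exact (intervalIntegral.continuous_primitive (fun _ _ => hu.intervalIntegrable) 0).add continuous_const

lemma exp_lip {B a b : ℝ} (ha : |a| ≤ B) (hb : |b| ≤ B) :
    dist (Real.exp a) (Real.exp b) ≤ Real.exp B * dist a b := by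
  have := Convex.norm_image_sub_le_of_norm_hasDerivWithin_le (f := Real.exp) (s := Set.Iic B)
    (C := Real.exp B) (f' := Real.exp) (x := b) (y := a)
    (fun x _ => (Real.hasDerivAt_exp x).hasDerivWithinAt)
    (fun x hx => by rw [Real.norm_eq_abs, abs_of_pos (Real.exp_pos _)]; exact Real.exp_le_exp.2 hx)
    (convex_Iic B) ((abs_le.1 hb).2) ((abs_le.1 ha).2)
  simpa [Real.dist_eq] using this

lemma ac_exp {f : ℝ → ℝ} {a b B : ℝ} (hf : AbsolutelyContinuousOnInterval f a b)
    (hB : ∀ x, |f x| ≤ B) : AbsolutelyContinuousOnInterval (fun x => Real.exp (f x)) a b := by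
  unfold AbsolutelyContinuousOnInterval at *
  refine squeeze_zero (fun E => Finset.sum_nonneg fun _ _ => dist_nonneg) (fun E => ?_)
    (by simpa using hf.const_mul (Real.exp B))
  simp only
  rw [Finset.mul_sum]
  exact Finset.sum_le_sum fun i _ => exp_lip (hB _) (hB _)

lemma w0_cont {u₀ : ℝ → ℝ} (hu : Integrable u₀) :
    Continuous fun x => Real.exp (∫ z in Set.Iic x, u₀ z) := (U_cont hu).rexp

lemma v0_int {u₀ : ℝ → ℝ} (hu : Integrable u₀) :
    Integrable fun y => u₀ y * Real.exp (∫ z in Set.Iic y, u₀ z) := by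
  refine hu.mul_bdd (c := Real.exp (∫ z, |u₀ z|)) (w0_cont hu).aestronglyMeasurable ?_
  refine Eventually.of_forall fun x => ?_
  rw [Real.norm_eq_abs, abs_of_pos (Real.exp_pos _)]
  exact Real.exp_le_exp.2 ((abs_le.1 (U_bound hu x)).2)

lemma w0_sub {u₀ : ℝ → ℝ} (hu : Integrable u₀) (a b : ℝ) :
    ∫ y in a..b, u₀ y * Real.exp (∫ z in Set.Iic y, u₀ z) =
      Real.exp (∫ z in Set.Iic b, u₀ z) - Real.exp (∫ z in Set.Iic a, u₀ z) := by
  have hac : AbsolutelyContinuousOnInterval (fun x => ∫ z in Set.Iic x, u₀ z) a b := by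
    have h1 := (hu.intervalIntegrable (a := a) (b := b)).absolutelyContinuousOnInterval_intervalIntegral
      (c := a) (by simp)
    have : (fun x => ∫ z in Set.Iic x, u₀ z) =
      fun x => (∫ z in a..x, u₀ z) + ∫ z in Set.Iic a, u₀ z := funext fun x => U_eq hu a x
    rw [this]
    unfold AbsolutelyContinuousOnInterval at *
    simpa using h1
  rw [← (ac_exp hac (U_bound hu)).integral_deriv_eq_sub]
  apply intervalIntegral.integral_congr_ae
  filter_upwards [LocallyIntegrable.ae_hasDerivAt_integral hu.locallyIntegrable] with x hx _
  have h2 : HasDerivAt (fun x => ∫ z in Set.Iic x, u₀ z) (u₀ x) x := by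
    have : (fun x => ∫ z in Set.Iic x, u₀ z) =
      fun x => (∫ z in a..x, u₀ z) + ∫ z in Set.Iic a, u₀ z := funext fun x => U_eq hu a x
    rw [this]
    exact (hx a).add_const _
  rw [h2.exp.deriv]; ring

lemma U_atTop {u₀ : ℝ → ℝ} (hu : Integrable u₀) :
    Tendsto (fun x => ∫ z in Set.Iic x, u₀ z) atTop (𝓝 (∫ z, u₀ z)) :=
  (aecover_Iic tendsto_id).integral_tendsto_of_countably_generated hu

lemma w0_eq {u₀ : ℝ → ℝ} (hu : Integrable u₀) (b : ℝ) :
    Real.exp (∫ z in Set.Iic b, u₀ z) =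
      1 + ∫ y in Set.Iic b, u₀ y * Real.exp (∫ z in Set.Iic y, u₀ z) := by
  have h1 := intervalIntegral_tendsto_integral_Iic b (v0_int hu).integrableOn tendsto_id
  have h2 := (((tendsto_integral_Iic_zero (f := u₀) (μ := volume) (a := id) (l := atBot) tendsto_id)).rexp).const_sub
    (Real.exp (∫ z in Set.Iic b, u₀ z))
  simp only [id, w0_sub hu] at h1 h2
  have := tendsto_nhds_unique h1 h2
  rw [this, Real.exp_zero]; ring

lemma v0_mass {u₀ : ℝ → ℝ} (hu : Integrable u₀) :
    ∫ y, u₀ y * Real.exp (∫ z in Set.Iic y, u₀ z) = Real.exp (∫ z, u₀ z) - 1 := by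
  have h1 := U_atTop (v0_int hu)
  have h2 := ((U_atTop hu).rexp).sub_const 1
  refine tendsto_nhds_unique h1 (h2.congr fun x => ?_)
  rw [w0_eq hu x]; ring

/-! Part: formula for `w` and its derivative -/

lemma G1_eq {t : ℝ} (ht : 0 < t) (x : ℝ) : G1 x t = (√t)⁻¹ * gauss (x / √t) := by
  have hs : 0 < √t := Real.sqrt_pos.2 ht
  unfold G1 gauss
  rw [Real.mul_rpow (by positivity) ht.le]
  have h1 : t ^ (-(1:ℝ)/2) = (√t)⁻¹ := by
    rw [Real.sqrt_eq_rpow, ← Real.rpow_neg ht.le]; norm_num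
  rw [h1, div_pow, Real.sq_sqrt ht.le]
  have : -x^2/(4*t) = -(x^2/t)/4 := by field_simp
  rw [this]; ring

lemma w_scaled {t : ℝ} (ht : 0 < t) (x : ℝ) (f : ℝ → ℝ) :
    ∫ y, G1 (x - y) t * f y = ∫ η, gauss η * f (x - √t * η) := by
  have hs : 0 < √t := Real.sqrt_pos.2 ht
  have h1 : ∀ y, G1 (x - y) t * f y =
      (fun r => (fun η => (√t)⁻¹ * (gauss η * f (x - √t * η))) (r / √t)) (x - y) := by
    intro y
    simp only
    rw [G1_eq ht, mul_div_cancel₀ _ hs.ne']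
    rw [sub_sub_cancel]; ring
  simp_rw [h1]
  rw [integral_sub_left_eq_self (fun r => (fun η => (√t)⁻¹ * (gauss η * f (x - √t * η))) (r / √t)),
    Measure.integral_comp_div (fun η => (√t)⁻¹ * (gauss η * f (x - √t * η))), integral_const_mul,
    abs_of_pos hs, smul_eq_mul, ← mul_assoc, mul_inv_cancel₀ hs.ne', one_mul]

lemma w_swap {s : ℝ} (hs : 0 < s) (x : ℝ) {v : ℝ → ℝ} (hv : Integrable v) :
    Integrable (fun η => gauss η * ∫ z in Set.Iic (x - s * η), v z) ∧
    ∫ η, gauss η * ∫ z in Set.Iic (x - s * η), v z = ∫ z, Hf ((x - z) / s) * v z := by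
  set S : Set (ℝ × ℝ) := {p | p.2 ≤ x - s * p.1} with hS
  have hSm : MeasurableSet S := measurableSet_le (by fun_prop) (by fun_prop)
  have hSint : Integrable (S.indicator fun p : ℝ × ℝ => gauss p.1 * v p.2) (volume.prod volume) :=
    (gauss_integrable.mul_prod hv).indicator hSm
  have e1 : ∀ η, gauss η * ∫ z in Set.Iic (x - s * η), v z =
      ∫ z, S.indicator (fun p : ℝ × ℝ => gauss p.1 * v p.2) (η, z) := by
    intro η
    rw [← integral_const_mul, ← integral_indicator measurableSet_Iic]
    rfl
  have e2 : ∀ z, Hf ((x - z) / s) * v z =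
      ∫ η, S.indicator (fun p : ℝ × ℝ => gauss p.1 * v p.2) (η, z) := by
    intro z
    unfold Hf
    rw [← integral_mul_const, ← integral_indicator measurableSet_Iic]
    congr 1
    ext η
    simp only [Set.indicator, hS, Set.mem_Iic, Set.mem_ofPred_eq]
    have : η ≤ (x - z) / s ↔ z ≤ x - s * η := by
      rw [le_div_iff₀ hs]; constructor <;> intro h <;> linarith
    simp [this]
  constructor
  · simp_rw [e1]
    exact hSint.integral_prod_left
  · simp_rw [e1, e2]
    exact integral_integral_swap (f := fun η z => S.indicator (fun p : ℝ × ℝ => gauss p.1 * v p.2) (η, z)) hSint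

lemma w_formula {u₀ : ℝ → ℝ} (hu : Integrable u₀) {t : ℝ} (ht : 0 < t) (x : ℝ) :
    ∫ y, G1 (x - y) t * Real.exp (∫ z in Set.Iic y, u₀ z) =
      1 + ∫ z, Hf ((x - z) / √t) * (u₀ z * Real.exp (∫ y in Set.Iic z, u₀ y)) := by
  have hs : 0 < √t := Real.sqrt_pos.2 ht
  obtain ⟨h1, h2⟩ := w_swap hs x (v0_int hu)
  rw [w_scaled ht x (fun y => Real.exp (∫ z in Set.Iic y, u₀ z)), ← h2]
  have : ∀ η, gauss η * Real.exp (∫ z in Set.Iic (x - √t * η), u₀ z) = gauss η +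
      gauss η * ∫ z in Set.Iic (x - √t * η), u₀ z * Real.exp (∫ y in Set.Iic z, u₀ y) := by
    intro η; rw [w0_eq hu]; ring
  simp_rw [this]
  rw [integral_add gauss_integrable h1, gauss_integral]

lemma phi_int {φ : ℝ → ℝ} (hc : Continuous φ) (h0 : ∀ x, 0 ≤ φ x) (h1 : ∀ x, φ x ≤ 1)
    {v : ℝ → ℝ} (hv : Integrable v) (x s : ℝ) : Integrable fun z => φ ((x - z) / s) * v z := by
  refine hv.bdd_mul (c := 1) (by fun_prop) (Eventually.of_forall fun z => ?_)
  rw [Real.norm_eq_abs, abs_of_nonneg (h0 _)]; exact h1 _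

lemma w_deriv {v : ℝ → ℝ} (hv : Integrable v) {s : ℝ} (hs : 0 < s) (x : ℝ) :
    HasDerivAt (fun x => 1 + ∫ z, Hf ((x - z) / s) * v z)
      (s⁻¹ * ∫ z, gauss ((x - z) / s) * v z) x := by
  have := hasDerivAt_integral_of_dominated_loc_of_deriv_le (μ := volume) (s := Set.univ) (x₀ := x)
    (F := fun x z => Hf ((x - z) / s) * v z) (F' := fun x z => s⁻¹ * (gauss ((x - z) / s) * v z))
    (bound := fun z => s⁻¹ * |v z|) univ_mem
    (Eventually.of_forall fun x => (phi_int Hf_cont Hf_nonneg Hf_le_one hv x s).aestronglyMeasurable)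
    (phi_int Hf_cont Hf_nonneg Hf_le_one hv x s)
    ((phi_int gauss_cont gauss_nonneg gauss_le_one hv x s).const_mul _).aestronglyMeasurable
    (Eventually.of_forall fun z x _ => ?_) (hv.abs.const_mul _)
    (Eventually.of_forall fun z x _ => ?_)
  · rw [integral_const_mul] at this
    exact this.2.const_add 1
  · rw [norm_mul, norm_mul, Real.norm_eq_abs, Real.norm_eq_abs, Real.norm_eq_abs,
      abs_of_nonneg (gauss_nonneg _), abs_of_pos (inv_pos.2 hs)]
    gcongr
    exact mul_le_of_le_one_left (abs_nonneg _) (gauss_le_one _)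
  · have h1 : HasDerivAt (fun x => (x - z) / s) (1 / s) x := ((hasDerivAt_id x).sub_const z).div_const s
    have h2 := ((Hf_hasDeriv ((x - z) / s)).comp x h1).mul_const (v z)
    convert! h2 using 1
    ring

/-! Part: convergence -/

/-- Modulus for uniform convergence. -/
def Amod (v : ℝ → ℝ) (s : ℝ) : ℝ := ∫ z, min 1 |z / s| * |v z|

lemma Amod_int {v : ℝ → ℝ} (hv : Integrable v) (s : ℝ) : Integrable fun z => min 1 |z / s| * |v z| := by
  refine hv.abs.bdd_mul (c := 1) (by fun_prop) (Eventually.of_forall fun z => ?_)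
  rw [Real.norm_eq_abs, abs_of_nonneg (by positivity)]; exact min_le_left _ _

lemma Amod_nonneg (v : ℝ → ℝ) (s : ℝ) : 0 ≤ Amod v s := integral_nonneg fun z => by positivity

lemma Amod_tendsto {v : ℝ → ℝ} (hv : Integrable v) : Tendsto (Amod v) atTop (𝓝 0) := by
  change Tendsto (fun s => ∫ z, min 1 |z / s| * |v z|) atTop (𝓝 0)
  have := tendsto_integral_filter_of_dominated_convergence (μ := volume) (l := atTop)
    (F := fun s z => min 1 |z / s| * |v z|) (f := fun _ => 0) (fun z => |v z|)
    (Eventually.of_forall fun s => (Amod_int hv s).aestronglyMeasurable)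
    (Eventually.of_forall fun s => Eventually.of_forall fun z => ?_) hv.abs
    (Eventually.of_forall fun z => ?_)
  · simpa using this
  · rw [Real.norm_eq_abs, abs_of_nonneg (by positivity)]
    exact mul_le_of_le_one_left (abs_nonneg _) (min_le_left _ _)
  · have h1 : Tendsto (fun s : ℝ => z / s) atTop (𝓝 0) := tendsto_const_nhds.div_atTop tendsto_id
    have h2 := ((tendsto_const_nhds (x := (1:ℝ))).min h1.abs).mul_const |v z|
    simpa using h2

lemma phi_sub {φ : ℝ → ℝ} (hc : Continuous φ) (h0 : ∀ x, 0 ≤ φ x) (h1 : ∀ x, φ x ≤ 1)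
    {v : ℝ → ℝ} (hv : Integrable v) (x s : ℝ) :
    (∫ z, φ ((x - z) / s) * v z) - (∫ z, v z) * φ (x / s) =
      ∫ z, (φ (x / s - z / s) - φ (x / s)) * v z := by
  rw [mul_comm, ← integral_const_mul, ← integral_sub (phi_int hc h0 h1 hv x s) (hv.const_mul _)]
  congr 1; ext z; rw [sub_div]; ring

lemma phi_unif {φ : ℝ → ℝ} (hc : Continuous φ) (h0 : ∀ x, 0 ≤ φ x) (h1 : ∀ x, φ x ≤ 1)
    (hd : ∀ x y, |φ x - φ y| ≤ min 1 |x - y|)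
    {v : ℝ → ℝ} (hv : Integrable v) (x s : ℝ) :
    |(∫ z, φ ((x - z) / s) * v z) - (∫ z, v z) * φ (x / s)| ≤ Amod v s := by
  rw [phi_sub hc h0 h1 hv]
  refine abs_integral_le_integral_abs.trans ?_
  refine integral_mono_of_nonneg (Eventually.of_forall fun z => abs_nonneg _) (Amod_int hv s)
    (Eventually.of_forall fun z => ?_)
  simp only [abs_mul]
  gcongr
  refine (hd _ _).trans ?_
  rw [show x / s - z / s - x / s = -(z / s) by ring, abs_neg]

/-- L1 modulus of translation. -/
def Nmod (a : ℝ) : ℝ≥0∞ := ∫⁻ ξ, ‖gauss (ξ - a) - gauss ξ‖ₑ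

lemma Nmod_meas : Measurable Nmod := by
  unfold Nmod
  have : Continuous fun p : ℝ × ℝ => ‖gauss (p.2 - p.1) - gauss p.2‖ₑ :=
    ((gauss_cont.comp (by fun_prop)).sub (gauss_cont.comp (by fun_prop))).enorm
  exact this.measurable.lintegral_prod_right'

lemma gauss_lint_s3 : ∫⁻ ξ, ‖gauss ξ‖ₑ = 1 := by
  have := ofReal_integral_norm_eq_lintegral_enorm gauss_integrable
  rw [← this]
  simp only [Real.norm_eq_abs, abs_of_nonneg (gauss_nonneg _), gauss_integral, ENNReal.ofReal_one]

lemma Nmod_le (a : ℝ) : Nmod a ≤ 2 := by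
  unfold Nmod
  calc ∫⁻ ξ, ‖gauss (ξ - a) - gauss ξ‖ₑ ≤ ∫⁻ ξ, (‖gauss (ξ - a)‖ₑ + ‖gauss ξ‖ₑ) :=
        lintegral_mono fun ξ => enorm_sub_le
    _ = (∫⁻ ξ, ‖gauss (ξ - a)‖ₑ) + ∫⁻ ξ, ‖gauss ξ‖ₑ :=
        lintegral_add_right _ gauss_cont.enorm.measurable
    _ = 2 := by
        rw [lintegral_sub_right_eq_self (fun ξ => ‖gauss ξ‖ₑ) a, gauss_lint_s3]; norm_num

lemma Nmod_tendsto : Tendsto Nmod (𝓝 0) (𝓝 0) := by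
  change Tendsto (fun a => ∫⁻ ξ, ‖gauss (ξ - a) - gauss ξ‖ₑ) (𝓝 0) (𝓝 0)
  have hb : Integrable fun ξ : ℝ => Real.exp (1/4) * Real.exp (-(1/8) * ξ ^ 2) +
      Real.exp (-(1/4) * ξ ^ 2) :=
    ((integrable_exp_neg_mul_sq (by norm_num)).const_mul _).add
      (integrable_exp_neg_mul_sq (by norm_num))
  have := tendsto_lintegral_filter_of_dominated_convergence (μ := volume) (l := 𝓝 (0:ℝ))
    (F := fun a ξ => ‖gauss (ξ - a) - gauss ξ‖ₑ) (f := fun _ => 0)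
    (fun ξ => ‖Real.exp (1/4) * Real.exp (-(1/8) * ξ ^ 2) + Real.exp (-(1/4) * ξ ^ 2)‖ₑ)
    (Eventually.of_forall fun a =>
      ((gauss_cont.comp (by fun_prop)).sub gauss_cont).enorm.measurable) ?_
    hb.2.ne (Eventually.of_forall fun ξ => ?_)
  · simpa using this
  · filter_upwards [Metric.closedBall_mem_nhds (0:ℝ) one_pos] with a ha
    refine Eventually.of_forall fun ξ => ?_
    rw [enorm_le_iff_norm_le, Real.norm_eq_abs, Real.norm_eq_abs,
      abs_of_pos (a := Real.exp (1/4) * _ + _) (by positivity)]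
    refine (norm_sub_le (gauss (ξ - a)) (gauss ξ)).trans ?_
    rw [Real.norm_eq_abs, Real.norm_eq_abs]
    rw [abs_of_nonneg (gauss_nonneg _), abs_of_nonneg (gauss_nonneg _)]
    refine add_le_add ?_ (gauss_le_exp ξ)
    refine (gauss_le_exp _).trans ?_
    rw [← Real.exp_add, Real.exp_le_exp]
    have ha' : |a| ≤ 1 := by simpa using ha
    have : a^2 ≤ 1 := by rw [← sq_abs]; nlinarith [abs_nonneg a]
    nlinarith [sq_nonneg (ξ - 2 * a)]
  · have h : Continuous fun a => ‖gauss (ξ - a) - gauss ξ‖ₑ :=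
      ((gauss_cont.comp (by fun_prop)).sub continuous_const).enorm
    simpa using h.tendsto 0

/-- Modulus for L1 convergence. -/
def Bmod (v : ℝ → ℝ) (s : ℝ) : ℝ≥0∞ := ∫⁻ z, Nmod (z / s) * ‖v z‖ₑ

lemma Bmod_tendsto {v : ℝ → ℝ} (hv : Integrable v) : Tendsto (Bmod v) atTop (𝓝 0) := by
  change Tendsto (fun s => ∫⁻ z, Nmod (z / s) * ‖v z‖ₑ) atTop (𝓝 0)
  have := tendsto_lintegral_filter_of_dominated_convergence' (μ := volume) (l := atTop)
    (F := fun s z => Nmod (z / s) * ‖v z‖ₑ) (f := fun _ => 0) (fun z => 2 * ‖v z‖ₑ)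
    (Eventually.of_forall fun s => (Nmod_meas.comp (by fun_prop)).aemeasurable.mul hv.1.enorm)
    (Eventually.of_forall fun s => Eventually.of_forall fun z => ?_)
    (by rw [lintegral_const_mul' _ _ (by norm_num)]; exact ENNReal.mul_ne_top (by norm_num) hv.2.ne)
    (Eventually.of_forall fun z => ?_)
  · simpa using this
  · gcongr; exact Nmod_le _
  · have h1 : Tendsto (fun s : ℝ => z / s) atTop (𝓝 0) := tendsto_const_nhds.div_atTop tendsto_id
    have := ENNReal.Tendsto.mul_const (Nmod_tendsto.comp h1) (b := ‖v z‖ₑ) (Or.inr enorm_ne_top)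
    simpa using this

lemma V_L1 {v : ℝ → ℝ} (hv : Integrable v) (s : ℝ) :
    ∫⁻ ξ, ‖∫ z, (gauss (ξ - z / s) - gauss ξ) * v z‖ₑ ≤ Bmod v s := by
  calc _ ≤ ∫⁻ ξ, ∫⁻ z, ‖(gauss (ξ - z / s) - gauss ξ) * v z‖ₑ :=
        lintegral_mono fun ξ => enorm_integral_le_lintegral_enorm _
    _ = ∫⁻ z, ∫⁻ ξ, ‖(gauss (ξ - z / s) - gauss ξ) * v z‖ₑ := by
        apply lintegral_lintegral_swap
        have h : Continuous fun p : ℝ × ℝ => gauss (p.1 - p.2 / s) - gauss p.1 :=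
          (gauss_cont.comp (by fun_prop)).sub (gauss_cont.comp (by fun_prop))
        exact (h.aestronglyMeasurable.mul hv.1.comp_snd).enorm
    _ = Bmod v s := by
        unfold Bmod Nmod
        congr 1; ext z
        rw [← lintegral_mul_const' _ _ enorm_ne_top]
        simp_rw [enorm_mul]

lemma lint_scale_s3 {s : ℝ} (hs : 0 < s) (F : ℝ → ℝ≥0∞) :
    ENNReal.ofReal s⁻¹ * ∫⁻ x, F (x / s) = ∫⁻ x, F x := by
  have h := Real.smul_map_volume_mul_left (inv_ne_zero hs.ne')
  have he : MeasurableEmbedding (fun x : ℝ => s⁻¹ * x) :=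
    (Homeomorph.mulLeft₀ s⁻¹ (inv_ne_zero hs.ne')).measurableEmbedding
  conv_rhs => rw [← h]
  rw [lintegral_smul_measure, he.lintegral_map, abs_of_pos (inv_pos.2 hs)]
  simp_rw [div_eq_inv_mul, smul_eq_mul]

/-! Part: interpolation -/

lemma interp_s3 {f : ℝ → ℝ} {t : ℝ} (ht : 0 < t) {ε : ℝ≥0∞}
    (h1 : ∀ x, ‖f x‖ₑ ≤ ENNReal.ofReal (√t)⁻¹ * ε) (h2 : ∫⁻ x, ‖f x‖ₑ ≤ ε) (p : ℝ≥0∞) (hp : 1 ≤ p) :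
    ENNReal.ofReal (t ^ ((1 / 2 : ℝ) * (1 - 1 / p.toReal))) * eLpNorm f p volume ≤ ε := by
  have hs : 0 < √t := Real.sqrt_pos.2 ht
  by_cases hε : ε = ⊤
  · simp [hε]
  by_cases hpt : p = ⊤
  · subst hpt
    have : eLpNorm f ⊤ volume ≤ ENNReal.ofReal (√t)⁻¹ * ε := by
      rw [eLpNorm_exponent_top]
      exact essSup_le_of_ae_le _ (Eventually.of_forall h1)
    calc _ ≤ ENNReal.ofReal (t ^ ((1 / 2 : ℝ) * (1 - 1 / (⊤:ℝ≥0∞).toReal))) * (ENNReal.ofReal (√t)⁻¹ * ε) := by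
          gcongr
      _ = ε := by
          rw [← mul_assoc, ← ENNReal.ofReal_mul (by positivity)]
          simp [← Real.sqrt_eq_rpow, hs.ne', -one_div]
  · set q := p.toReal with hq
    have hq1 : 1 ≤ q := by
      have := ENNReal.toReal_mono hpt hp
      simpa using this
    have hq0 : 0 < q := by linarith
    have hp0 : p ≠ 0 := (lt_of_lt_of_le one_pos hp).ne'
    have hI : ∫⁻ x, ‖f x‖ₑ ^ q ≤ (ENNReal.ofReal (√t)⁻¹) ^ (q - 1) * ε ^ q := by
      calc ∫⁻ x, ‖f x‖ₑ ^ q ≤ ∫⁻ x, (ENNReal.ofReal (√t)⁻¹ * ε) ^ (q - 1) * ‖f x‖ₑ := by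
            refine lintegral_mono fun x => ?_
            calc ‖f x‖ₑ ^ q = ‖f x‖ₑ ^ (q - 1) * ‖f x‖ₑ := by
                  conv_rhs => rw [← ENNReal.rpow_one ‖f x‖ₑ, ← ENNReal.rpow_mul, one_mul,
                    ← ENNReal.rpow_add_of_nonneg _ _ (by linarith) (by norm_num)]
                  congr 1; ring
              _ ≤ _ := by
                  gcongr
                  exact h1 x
        _ = (ENNReal.ofReal (√t)⁻¹ * ε) ^ (q - 1) * ∫⁻ x, ‖f x‖ₑ := by
            rw [lintegral_const_mul']
            exact ENNReal.rpow_ne_top_of_nonneg (by linarith) (ENNReal.mul_ne_top ENNReal.ofReal_ne_top hε)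
        _ ≤ (ENNReal.ofReal (√t)⁻¹ * ε) ^ (q - 1) * ε := by gcongr
        _ = _ := by
            rw [ENNReal.mul_rpow_of_nonneg _ _ (by linarith), mul_assoc]
            congr 1
            conv_lhs => enter [2]; rw [← ENNReal.rpow_one ε]
            rw [← ENNReal.rpow_add_of_nonneg _ _ (by linarith) (by norm_num)]
            congr 1; ring
    rw [eLpNorm_eq_lintegral_rpow_enorm_toReal hp0 hpt]
    calc _ ≤ ENNReal.ofReal (t ^ ((1 / 2 : ℝ) * (1 - 1 / q))) *
          ((ENNReal.ofReal (√t)⁻¹) ^ (q - 1) * ε ^ q) ^ (1 / q) := by gcongr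
      _ = ε := by
          rw [ENNReal.mul_rpow_of_nonneg _ _ (by positivity), ← ENNReal.rpow_mul, ← ENNReal.rpow_mul,
            mul_one_div_cancel hq0.ne', ENNReal.rpow_one, ← mul_assoc,
            ENNReal.ofReal_rpow_of_pos (inv_pos.2 hs), ← ENNReal.ofReal_mul (by positivity)]
          have : t ^ ((1 / 2 : ℝ) * (1 - 1 / q)) * (√t)⁻¹ ^ ((q - 1) * (1 / q)) = 1 := by
            rw [Real.sqrt_eq_rpow, ← Real.rpow_neg ht.le, ← Real.rpow_mul ht.le, ← Real.rpow_add ht]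
            rw [show (1 / 2 : ℝ) * (1 - 1 / q) + -(1 / 2) * ((q - 1) * (1 / q)) = 0 by field_simp; ring]
            simp
          rw [this]; simp

lemma ptwise {c V W m g K A : ℝ} (hc : 0 < c) (hK : c ≤ K) (hW : c ≤ W) (hg : 0 ≤ g)
    (hA : |W - K| ≤ A) :
    |V / W - m * g / K| ≤ (1 / c + |m| / c ^ 2) * (|V - m * g| + A * g) := by
  have hK0 : 0 < K := by linarith
  have hW0 : 0 < W := by linarith
  have hA0 : 0 ≤ A := (abs_nonneg _).trans hA
  have e : V / W - m * g / K = (V - m * g) / W + m * g * (K - W) / (W * K) := by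
    field_simp; ring
  rw [e]
  refine (abs_add_le _ _).trans ?_
  have h1 : |(V - m * g) / W| ≤ 1 / c * |V - m * g| := by
    rw [abs_div, abs_of_pos hW0, div_eq_inv_mul, one_div]
    gcongr
  have h2 : |m * g * (K - W) / (W * K)| ≤ |m| / c ^ 2 * (A * g) := by
    rw [abs_div, abs_mul, abs_mul, abs_of_nonneg hg, abs_of_pos (mul_pos hW0 hK0), abs_sub_comm]
    calc |m| * g * |W - K| / (W * K) ≤ |m| * g * A / (c * c) := by gcongr
      _ = _ := by ring
  have h3 : 0 ≤ 1 / c * (A * g) := by positivity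
  have h4 : 0 ≤ |m| / c ^ 2 * |V - m * g| := by positivity
  nlinarith

theorem stmt3 (u₀ : ℝ → ℝ) (hu₀ : Integrable u₀) (M : ℝ) (hM : M = ∫ x, u₀ x)
    (w₀ : ℝ → ℝ) (hw₀ : w₀ = fun x => Real.exp (∫ z in Set.Iic x, u₀ z))
    (w : ℝ → ℝ → ℝ) (hw : w = fun x t => ∫ y, G1 (x - y) t * w₀ y)
    (u : ℝ → ℝ → ℝ) (hu : u = fun x t => deriv (fun x' => w x' t) x / w x t) :
    ∀ p : ℝ≥0∞, 1 ≤ p →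
      Tendsto
        (fun t : ℝ =>
          ENNReal.ofReal (t ^ ((1 / 2 : ℝ) * (1 - 1 / p.toReal))) *
            eLpNorm (fun x => u x t - uM M x t) p volume)
        atTop (𝓝 0) := by
  intro p hp
  set v : ℝ → ℝ := fun z => u₀ z * Real.exp (∫ y in Set.Iic z, u₀ y) with hv_def
  have hv : Integrable v := v0_int hu₀
  have hm : ∫ z, v z = Real.exp M - 1 := by rw [hM]; exact v0_mass hu₀
  set m := Real.exp M - 1 with hm_def
  set c := min 1 (Real.exp M) / 2 with hc_def
  have hc : 0 < c := by have := Real.exp_pos M; positivity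
  have hK : ∀ ξ, 2 * c ≤ m * Hf ξ + 1 := by
    intro ξ
    have h1 : 2 * c ≤ 1 := by rw [hc_def]; linarith [min_le_left 1 (Real.exp M)]
    have h2 : 2 * c ≤ Real.exp M := by rw [hc_def]; linarith [min_le_right 1 (Real.exp M)]
    nlinarith [Hf_nonneg ξ, Hf_le_one ξ]
  set C := 1 / c + |m| / c ^ 2 with hC_def
  have hC : 0 ≤ C := by positivity
  have hsq : Tendsto (fun t : ℝ => √t) atTop atTop := Real.tendsto_sqrt_atTop
  have hA := (Amod_tendsto hv).comp hsq
  have hB := (Bmod_tendsto hv).comp hsq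
  have hε : Tendsto (fun t : ℝ => ENNReal.ofReal C * (Bmod v √t + ENNReal.ofReal (2 * Amod v √t)))
      atTop (𝓝 0) := by
    have h1 := ENNReal.tendsto_ofReal (hA.const_mul 2)
    have h2 := ENNReal.Tendsto.const_mul (hB.add h1) (a := ENNReal.ofReal C)
      (Or.inr ENNReal.ofReal_ne_top)
    simpa using h2
  refine tendsto_of_tendsto_of_tendsto_of_le_of_le' tendsto_const_nhds hε
    (Eventually.of_forall fun _ => zero_le) ?_
  filter_upwards [eventually_gt_atTop 0, hA.eventually (gt_mem_nhds hc)] with t ht hAt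
  simp only [Function.comp] at hAt
  have hs : 0 < √t := Real.sqrt_pos.2 ht
  set s := √t with hs_def
  set A := Amod v s with hA_def
  have hA0 : 0 ≤ A := Amod_nonneg v s
  have hwf : ∀ x, w x t = 1 + ∫ z, Hf ((x - z) / s) * v z := by
    intro x; rw [hw, hw₀]; exact w_formula hu₀ ht x
  have hwd : ∀ x, deriv (fun x' => w x' t) x = s⁻¹ * ∫ z, gauss ((x - z) / s) * v z := by
    intro x; simp_rw [hwf]; exact (w_deriv hv hs x).deriv
  -- error function
  set E : ℝ → ℝ := fun ξ => ∫ z, (gauss (ξ - z / s) - gauss ξ) * v z with hE_def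
  have hE : ∀ x, (∫ z, gauss ((x - z) / s) * v z) - m * gauss (x / s) = E (x / s) := by
    intro x; rw [← hm]; exact phi_sub gauss_cont gauss_nonneg gauss_le_one hv x s
  have hEA : ∀ x, |E (x / s)| ≤ A := by
    intro x; rw [← hE, ← hm]
    exact phi_unif gauss_cont gauss_nonneg gauss_le_one gauss_diff hv x s
  have hmain : ∀ x, |u x t - uM M x t| ≤ s⁻¹ * (C * (|E (x / s)| + A * gauss (x / s))) := by
    intro x
    have hu1 : u x t - uM M x t = s⁻¹ * ((∫ z, gauss ((x - z) / s) * v z) / w x t -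
        m * gauss (x / s) / (m * Hf (x / s) + 1)) := by
      have h1 : t ^ (-(1:ℝ)/2) = s⁻¹ := by
        rw [hs_def, Real.sqrt_eq_rpow, ← Real.rpow_neg ht.le]; norm_num
      rw [hu]
      simp only [hwd, uM, fM, h1]
      simp only [Hf, ← hm_def, ← hs_def]
      ring
    have hWK : |w x t - (m * Hf (x / s) + 1)| ≤ A := by
      have := phi_unif Hf_cont Hf_nonneg Hf_le_one Hf_diff hv x s
      rw [hm] at this
      rw [hwf]
      convert this using 2
      ring
    have hWc : c ≤ w x t := by
      have := (abs_le.1 hWK).1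
      linarith [hK (x / s)]
    rw [hu1, abs_mul, abs_of_pos (inv_pos.2 hs), ← hE]
    gcongr
    exact ptwise hc (by linarith [hK (x / s)]) hWc (gauss_nonneg _) hWK
  refine interp_s3 ht (fun x => ?_) ?_ p hp
  · rw [Real.enorm_eq_ofReal_abs]
    calc ENNReal.ofReal |u x t - uM M x t| ≤ ENNReal.ofReal (s⁻¹ * (C * (2 * A))) := by
          refine ENNReal.ofReal_le_ofReal ((hmain x).trans ?_)
          gcongr
          nlinarith [hEA x, gauss_le_one (x / s)]
      _ = ENNReal.ofReal s⁻¹ * (ENNReal.ofReal C * ENNReal.ofReal (2 * A)) := by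
          rw [ENNReal.ofReal_mul (inv_pos.2 hs).le, ENNReal.ofReal_mul hC]
      _ ≤ _ := by gcongr; exact le_add_self
  · calc ∫⁻ x, ‖u x t - uM M x t‖ₑ
        ≤ ∫⁻ x, ENNReal.ofReal s⁻¹ * (fun ξ => ENNReal.ofReal C *
            (‖E ξ‖ₑ + ENNReal.ofReal A * ‖gauss ξ‖ₑ)) (x / s) := by
          refine lintegral_mono fun x => ?_
          simp only [Real.enorm_eq_ofReal_abs]
          refine (ENNReal.ofReal_le_ofReal (hmain x)).trans_eq ?_
          rw [ENNReal.ofReal_mul (inv_pos.2 hs).le, ENNReal.ofReal_mul hC,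
            ENNReal.ofReal_add (abs_nonneg _) (mul_nonneg hA0 (gauss_nonneg _)),
            ENNReal.ofReal_mul hA0, abs_of_nonneg (gauss_nonneg _)]
      _ = ENNReal.ofReal C * ((∫⁻ ξ, ‖E ξ‖ₑ) + ENNReal.ofReal A) := by
          rw [lintegral_const_mul' _ _ ENNReal.ofReal_ne_top, lint_scale_s3 hs (fun ξ => ENNReal.ofReal C *
            (‖E ξ‖ₑ + ENNReal.ofReal A * ‖gauss ξ‖ₑ)),
            lintegral_const_mul' _ _ ENNReal.ofReal_ne_top,
            lintegral_add_right _ (gauss_cont.enorm.measurable.const_mul _),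
            lintegral_const_mul' _ _ ENNReal.ofReal_ne_top, gauss_lint_s3, mul_one]
      _ ≤ _ := by
          gcongr
          · exact V_L1 hv s
          · linarith
end
end

section
/- Let N ≥ 1 and K(y) = exp(|y|²/4). For every v in the weighted Sobolev space H¹(K), one has ∫_{ℝ^N} |v(y)|² |y|² K(y) dy ≤ 16 ∫_{ℝ^N} |∇v(y)|² K(y) dy. -/
open MeasureTheory Real Filter Topology
open scoped ENNReal

noncomputable section

/-- The Gaussian weight `K(y) = exp(|y|²/4)`. -/
def Kw (N : ℕ) (y : Euc N) : ℝ := Real.exp (‖y‖ ^ 2 / 4)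


lemma aux_int_zero {N : ℕ} {f : Euc N → ℝ} (e : Euc N) (hd : Differentiable ℝ f)
    (hf : Integrable f) (hf' : Integrable (fun y => fderiv ℝ f y e)) :
    ∫ y, fderiv ℝ f y e = 0 := by
  have h := integral_mul_fderiv_eq_neg_fderiv_mul_of_integrable (μ := (volume : Measure (Euc N)))
    (f := f) (g := fun _ => (1 : ℝ)) (v := e) (by simpa using hf') (by simp) (by simpa using hf)
    (fun x _ => hd x) (fun x _ => by fun_prop)
  simpa using h.symm

def etaw (N : ℕ) (ε : ℝ) (y : Euc N) : ℝ := (1 + ε * ‖y‖ ^ 2)⁻¹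

def Fw (N : ℕ) (ε : ℝ) (v : Euc N → ℝ) (i : Fin N) (y : Euc N) : ℝ :=
  y i * (v y ^ 2 * (Kw N y * etaw N ε y))

lemma etaw_pos {N : ℕ} {ε : ℝ} (hε : 0 < ε) (y : Euc N) : 0 < etaw N ε y := by
  unfold etaw; positivity

lemma etaw_eq {N : ℕ} {ε : ℝ} (hε : 0 < ε) (y : Euc N) :
    etaw N ε y + ε * ‖y‖ ^ 2 * etaw N ε y = 1 := by
  unfold etaw
  have : 1 + ε * ‖y‖ ^ 2 ≠ 0 := by positivity
  field_simp

lemma Kw_pos {N : ℕ} (y : Euc N) : 0 < Kw N y := Real.exp_pos _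

lemma Fw_hasFDerivAt {N : ℕ} {ε : ℝ} (hε : 0 < ε) {v : Euc N → ℝ} (hv : Differentiable ℝ v)
    (i : Fin N) (y : Euc N) :
    ∃ L : Euc N →L[ℝ] ℝ, HasFDerivAt (Fw N ε v i) L y ∧
      L (EuclideanSpace.single i 1) =
        etaw N ε y * Kw N y * (v y ^ 2 + 2 * v y * y i * (gradient v y) i + v y ^ 2 * y i ^ 2 / 2
          - 2 * ε * v y ^ 2 * y i ^ 2 * etaw N ε y) := by
  have h1 : HasFDerivAt (fun y : Euc N => ‖y‖ ^ 2) (2 • innerSL ℝ y) y :=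
    (hasStrictFDerivAt_norm_sq y).hasFDerivAt
  have h2 : HasFDerivAt (fun y : Euc N => y i) (EuclideanSpace.proj i : Euc N →L[ℝ] ℝ) y :=
    (EuclideanSpace.proj i : Euc N →L[ℝ] ℝ).hasFDerivAt
  have hK : HasFDerivAt (Kw N) _ y := (h1.mul_const (4⁻¹ : ℝ)).exp
  have hne : 1 + ε * ‖y‖ ^ 2 ≠ 0 := by positivity
  have hE : HasFDerivAt (etaw N ε) _ y :=
    (hasDerivAt_inv hne).comp_hasFDerivAt y ((h1.const_mul ε).const_add 1)
  have hvv := (hv y).hasFDerivAt.pow 2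
  have hF : HasFDerivAt (Fw N ε v i) _ y := h2.mul (hvv.mul (hK.mul hE))
  refine ⟨_, hF, ?_⟩
  have hg : fderiv ℝ v y (EuclideanSpace.single i 1) = (gradient v y) i := by
    rw [← toDual_gradient, InnerProductSpace.toDual_apply_apply, EuclideanSpace.inner_single_right]
    simp
  have e1 : rexp (‖y‖ ^ 2 * 4⁻¹) = Kw N y := by simp [Kw, div_eq_mul_inv]
  have e2 : ((1 + ε * ‖y‖ ^ 2) ^ 2)⁻¹ = etaw N ε y ^ 2 := by simp [etaw]
  simp [hg, e1, e2, EuclideanSpace.inner_single_right]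
  ring

lemma Fw_diff {N : ℕ} {ε : ℝ} (hε : 0 < ε) {v : Euc N → ℝ} (hv : Differentiable ℝ v)
    (i : Fin N) : Differentiable ℝ (Fw N ε v i) := fun y => by
  obtain ⟨L, hL, _⟩ := Fw_hasFDerivAt hε hv i y
  exact hL.differentiableAt

lemma Fw_fderiv {N : ℕ} {ε : ℝ} (hε : 0 < ε) {v : Euc N → ℝ} (hv : Differentiable ℝ v)
    (i : Fin N) (y : Euc N) :
    fderiv ℝ (Fw N ε v i) y (EuclideanSpace.single i 1) =
        etaw N ε y * Kw N y * (v y ^ 2 + 2 * v y * y i * (gradient v y) i + v y ^ 2 * y i ^ 2 / 2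
          - 2 * ε * v y ^ 2 * y i ^ 2 * etaw N ε y) := by
  obtain ⟨L, hL, h⟩ := Fw_hasFDerivAt hε hv i y
  rw [hL.fderiv, h]

lemma coord_sq_le {N : ℕ} (y : Euc N) (i : Fin N) : y i ^ 2 ≤ ‖y‖ ^ 2 := by
  rw [EuclideanSpace.real_norm_sq_eq]
  exact Finset.single_le_sum (f := fun i => y i ^ 2) (fun _ _ => sq_nonneg _) (Finset.mem_univ i)

lemma bound_s {N : ℕ} {ε : ℝ} (hε : 0 < ε) (y : Euc N) :
    ‖y‖ ^ 2 * etaw N ε y ≤ 1 / ε := by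
  have := etaw_eq hε y
  have := etaw_pos hε y
  rw [le_div_iff₀ hε]; nlinarith

lemma etaw_le {N : ℕ} {ε : ℝ} (hε : 0 < ε) (y : Euc N) : etaw N ε y ≤ 1 := by
  have := etaw_eq hε y
  have h := etaw_pos hε y
  have : 0 ≤ ε * ‖y‖ ^ 2 * etaw N ε y := by positivity
  linarith

lemma real_bound1 {ε η t c v g : ℝ} (hη : 0 < η) (hη1 : η ≤ 1) (hc : 0 < c)
    (hs : t ^ 2 * η ≤ c) (hs' : ε * (t ^ 2 * η) ≤ 1) (hε : 0 < ε) :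
    |η * (v ^ 2 + 2 * v * t * g + v ^ 2 * t ^ 2 / 2 - 2 * ε * v ^ 2 * t ^ 2 * η)|
      ≤ (4 + c) * v ^ 2 + c * g ^ 2 := by
  have a1 : η * v ^ 2 ≤ v ^ 2 := by nlinarith [sq_nonneg v]
  have a1' : 0 ≤ η * v ^ 2 := by positivity
  have a2 : (t * η * g) ^ 2 ≤ c * g ^ 2 := by
    have : (t * η) ^ 2 ≤ c := by
      have : (t * η) ^ 2 = (t ^ 2 * η) * η := by ring
      have : 0 ≤ t ^ 2 * η := by positivity
      nlinarith
    rw [mul_pow]; gcongr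
  have a3 : (t ^ 2 * η) * v ^ 2 ≤ c * v ^ 2 := by gcongr
  have a3' : 0 ≤ (t ^ 2 * η) * v ^ 2 := by positivity
  have a4' : 0 ≤ ε * (t ^ 2 * η) * v ^ 2 * η := by positivity
  have a4 : ε * (t ^ 2 * η) * v ^ 2 * η ≤ v ^ 2 := by
    calc ε * (t ^ 2 * η) * v ^ 2 * η = ε * (t ^ 2 * η) * (η * v ^ 2) := by ring
      _ ≤ 1 * (η * v ^ 2) := by gcongr
      _ ≤ v ^ 2 := by linarith
  have b1 := sq_nonneg (v + t * η * g)
  have b2 := sq_nonneg (v - t * η * g)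
  have : η * (v ^ 2 + 2 * v * t * g + v ^ 2 * t ^ 2 / 2 - 2 * ε * v ^ 2 * t ^ 2 * η) =
    η * v ^ 2 + 2 * v * (t * η * g) + (t ^ 2 * η) * v ^ 2 / 2
      - 2 * (ε * (t ^ 2 * η) * v ^ 2 * η) := by ring
  rw [this, abs_le]
  constructor <;> nlinarith [sq_nonneg v, sq_nonneg g]

lemma Fw_integrable {N : ℕ} {ε : ℝ} (hε : 0 < ε) {v : Euc N → ℝ} (hv : Differentiable ℝ v)
    (hL2 : Integrable (fun y => v y ^ 2 * Kw N y)) (i : Fin N) : Integrable (Fw N ε v i) := by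
  refine (hL2.const_mul (1 + 1 / ε)).mono'
    (Fw_diff hε hv i).continuous.aestronglyMeasurable (ae_of_all _ fun y => ?_)
  have h1 := bound_s hε y
  have h2 := etaw_le hε y
  have h3 := etaw_pos hε y
  have h4 := coord_sq_le y i
  have h5 : |y i| * etaw N ε y ≤ 1 + 1 / ε := by
    have : |y i| ≤ 1 + ‖y‖ ^ 2 := by nlinarith [sq_abs (y i), sq_nonneg (|y i| - 1)]
    calc |y i| * etaw N ε y ≤ (1 + ‖y‖ ^ 2) * etaw N ε y := by gcongr
      _ ≤ _ := by linarith
  have hK := Kw_pos y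
  rw [Fw, Real.norm_eq_abs, abs_mul, abs_of_nonneg (by positivity : 0 ≤ v y ^ 2 * (Kw N y * etaw N ε y))]
  calc |y i| * (v y ^ 2 * (Kw N y * etaw N ε y)) = (|y i| * etaw N ε y) * (v y ^ 2 * Kw N y) := by ring
    _ ≤ _ := by gcongr

lemma Fw'_integrable {N : ℕ} {ε : ℝ} (hε : 0 < ε) {v : Euc N → ℝ} (hv : Differentiable ℝ v)
    (hL2 : Integrable (fun y => v y ^ 2 * Kw N y))
    (hH1 : Integrable (fun y => ‖gradient v y‖ ^ 2 * Kw N y)) (i : Fin N) :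
    Integrable (fun y => fderiv ℝ (Fw N ε v i) y (EuclideanSpace.single i 1)) := by
  refine ((hL2.const_mul (4 + 1 / ε)).add (hH1.const_mul (1 / ε))).mono'
    (measurable_fderiv_apply_const ℝ _ _).aestronglyMeasurable (ae_of_all _ fun y => ?_)
  rw [Fw_fderiv hε hv i y, Real.norm_eq_abs]
  have h1 := bound_s hε y
  have h2 := etaw_le hε y
  have h3 := etaw_pos hε y
  have h4 := coord_sq_le y i
  have h5 : y i ^ 2 * etaw N ε y ≤ 1 / ε := le_trans (by gcongr) h1
  have hK := Kw_pos y
  have h6 : ε * (y i ^ 2 * etaw N ε y) ≤ 1 := by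
    rw [le_div_iff₀ hε] at h5; linarith
  have key := real_bound1 (v := v y) (g := (gradient v y) i) h3 h2 (by positivity) h5 h6 hε
  rw [mul_comm (etaw N ε y), mul_assoc, abs_mul, abs_of_pos hK]
  have h7 := coord_sq_le (gradient v y) i
  calc _ ≤ Kw N y * ((4 + 1 / ε) * v y ^ 2 + 1 / ε * (gradient v y) i ^ 2) := by gcongr
    _ ≤ Kw N y * ((4 + 1 / ε) * v y ^ 2 + 1 / ε * ‖gradient v y‖ ^ 2) := by gcongr
    _ = _ := by simp only [Pi.add_apply]; ring

lemma sum_ge {N : ℕ} {ε : ℝ} (hε : 0 < ε) {v : Euc N → ℝ} (hv : Differentiable ℝ v) (y : Euc N) :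
    (1 / 4 - 2 * ε) * (v y ^ 2 * ‖y‖ ^ 2 * Kw N y * etaw N ε y) - 4 * (‖gradient v y‖ ^ 2 * Kw N y)
      ≤ ∑ i, fderiv ℝ (Fw N ε v i) y (EuclideanSpace.single i 1) := by
  simp only [Fw_fderiv hε hv]
  have h2 := etaw_le hε y
  have h3 := etaw_pos hε y
  have hK := Kw_pos y
  have hin : ∑ i, y i * (gradient v y) i = inner ℝ (gradient v y) y := by
    rw [PiLp.inner_apply]
    exact Finset.sum_congr rfl fun i _ => by simp
  have hs : ∑ i, etaw N ε y * Kw N y * (v y ^ 2 + 2 * v y * y i * (gradient v y) i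
      + v y ^ 2 * y i ^ 2 / 2 - 2 * ε * v y ^ 2 * y i ^ 2 * etaw N ε y)
      = etaw N ε y * Kw N y * (N * v y ^ 2 + 2 * v y * inner ℝ (gradient v y) y
        + v y ^ 2 * ‖y‖ ^ 2 / 2 - 2 * ε * v y ^ 2 * ‖y‖ ^ 2 * etaw N ε y) := by
    rw [← hin, EuclideanSpace.real_norm_sq_eq, ← Finset.mul_sum]
    simp only [Finset.sum_add_distrib, Finset.sum_sub_distrib, Finset.mul_sum, Finset.sum_mul,
      Finset.sum_div]
    simp [mul_assoc]
  rw [hs]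
  have hcs := abs_real_inner_le_norm (gradient v y) y
  set I := inner ℝ (gradient v y) y
  set g := ‖gradient v y‖
  set r := ‖y‖
  set w := v y
  set η := etaw N ε y
  set K := Kw N y
  have c1 : -(w ^ 2 * r ^ 2 / 4 + 4 * g ^ 2) ≤ 2 * w * I := by
    have : |w * I| ≤ |w| * (g * r) := by rw [abs_mul]; gcongr
    have := neg_abs_le (w * I)
    have := sq_nonneg (|w| * r / 2 - 2 * g)
    have e : (|w| * r / 2 - 2 * g) ^ 2 = |w| ^ 2 * r ^ 2 / 4 + 4 * g ^ 2 - 2 * (|w| * (g * r)) := by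
      ring
    rw [sq_abs] at e
    linarith
  have c2 : 2 * ε * w ^ 2 * r ^ 2 * η ≤ 2 * ε * w ^ 2 * r ^ 2 := 
    mul_le_of_le_one_right (by positivity) h2
  have c3 : 0 ≤ N * w ^ 2 := by positivity
  have c4 : η * K * (4 * g ^ 2) ≤ K * (4 * g ^ 2) := by
    gcongr; exact mul_le_of_le_one_left hK.le h2
  calc (1 / 4 - 2 * ε) * (w ^ 2 * r ^ 2 * K * η) - 4 * (g ^ 2 * K)
      ≤ η * K * ((1 / 4 - 2 * ε) * (w ^ 2 * r ^ 2) - 4 * g ^ 2) := by linarith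
    _ ≤ _ := by
      refine mul_le_mul_of_nonneg_left ?_ (by positivity)
      linarith

lemma main_eps {N : ℕ} {ε : ℝ} (hε : 0 < ε) (hε' : 2 * ε ≤ 1 / 4)
    {v : Euc N → ℝ} (hv : Differentiable ℝ v)
    (hL2 : Integrable (fun y => v y ^ 2 * Kw N y))
    (hH1 : Integrable (fun y => ‖gradient v y‖ ^ 2 * Kw N y)) :
    ∫⁻ y, ENNReal.ofReal ((1 / 4 - 2 * ε) * (v y ^ 2 * ‖y‖ ^ 2 * Kw N y * etaw N ε y)) ≤
      4 * ∫⁻ y, ENNReal.ofReal (‖gradient v y‖ ^ 2 * Kw N y) := by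
  have hcK : Continuous (Kw N) := by unfold Kw; fun_prop
  have hcE : Continuous (etaw N ε) := by
    unfold etaw
    exact Continuous.inv₀ (by fun_prop) (fun y => by positivity)
  have hcv := hv.continuous
  have hA : Integrable (fun y => (1 / 4 - 2 * ε) * (v y ^ 2 * ‖y‖ ^ 2 * Kw N y * etaw N ε y)) := by
    refine Integrable.const_mul ?_ _
    refine (hL2.const_mul (1 / ε)).mono' (by fun_prop) (ae_of_all _ fun y => ?_)
    have h1 := bound_s hε y
    have h3 := etaw_pos hε y
    have hK := Kw_pos y
    rw [Real.norm_eq_abs, abs_of_nonneg (by positivity)]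
    calc _ = (‖y‖ ^ 2 * etaw N ε y) * (v y ^ 2 * Kw N y) := by ring
      _ ≤ _ := by gcongr
  have hz : ∫ y, ∑ i, fderiv ℝ (Fw N ε v i) y (EuclideanSpace.single i 1) = 0 := by
    rw [integral_finsetSum _ fun i _ => Fw'_integrable hε hv hL2 hH1 i]
    exact Finset.sum_eq_zero fun i _ => aux_int_zero _ (Fw_diff hε hv i)
      (Fw_integrable hε hv hL2 i) (Fw'_integrable hε hv hL2 hH1 i)
  have hle := integral_mono (hA.sub (hH1.const_mul 4))
    (integrable_finsetSum _ fun i _ => Fw'_integrable hε hv hL2 hH1 i) (fun y => sum_ge hε hv y)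
  rw [hz] at hle
  simp only [Pi.sub_apply] at hle
  rw [integral_sub hA (hH1.const_mul 4), integral_const_mul 4] at hle
  rw [← ofReal_integral_eq_lintegral_ofReal hA, ← ofReal_integral_eq_lintegral_ofReal hH1,
    show (4 : ℝ≥0∞) = ENNReal.ofReal 4 by simp, ← ENNReal.ofReal_mul (by norm_num)]
  · exact ENNReal.ofReal_le_ofReal (by linarith)
  · exact ae_of_all _ fun y => by have := Kw_pos y; positivity
  · refine ae_of_all _ fun y => ?_
    have := Kw_pos y
    have := etaw_pos hε y
    have : 0 ≤ 1 / 4 - 2 * ε := by linarith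
    simp only [Pi.zero_apply]
    positivity

/-- For every `v` in the weighted Sobolev space `H¹(K)`,
`∫ |v(y)|² |y|² K(y) dy ≤ 16 ∫ |∇v(y)|² K(y) dy`. -/
theorem stmt5 (N : ℕ) (hN : 1 ≤ N) (v : Euc N → ℝ)
    (hdiff : Differentiable ℝ v)
    (hL2 : Integrable (fun y => v y ^ 2 * Kw N y))
    (hH1 : Integrable (fun y => ‖gradient v y‖ ^ 2 * Kw N y)) :
    (∫⁻ y, ENNReal.ofReal (v y ^ 2 * ‖y‖ ^ 2 * Kw N y)) ≤
      16 * ∫⁻ y, ENNReal.ofReal (‖gradient v y‖ ^ 2 * Kw N y) := by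
  let ε : ℕ → ℝ := fun n => 1 / ((n : ℝ) + 8)
  have hε : ∀ n, 0 < ε n := fun n => by positivity
  have hε' : ∀ n, 2 * ε n ≤ 1 / 4 := fun n => by
    have : ε n ≤ 1 / 8 := one_div_le_one_div_of_le (by norm_num) (by linarith [n.cast_nonneg (α := ℝ)])
    linarith
  have hlim : Tendsto ε atTop (𝓝 0) :=
    tendsto_const_nhds.div_atTop (tendsto_atTop_add_const_right _ _ tendsto_natCast_atTop_atTop)
  have hcK : Continuous (Kw N) := by unfold Kw; fun_prop
  have hcv := hdiff.continuous
  let f : ℕ → Euc N → ℝ≥0∞ := fun n y =>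
    ENNReal.ofReal ((1 / 4 - 2 * ε n) * (v y ^ 2 * ‖y‖ ^ 2 * Kw N y * etaw N (ε n) y))
  have hmeas : ∀ n, Measurable (f n) := fun n => by
    have hcE : Continuous (etaw N (ε n)) := by
      unfold etaw
      exact Continuous.inv₀ (by fun_prop) (fun y => by have := hε n; positivity)
    exact Measurable.ennreal_ofReal (Continuous.measurable (by fun_prop))
  have hpt : ∀ y, Tendsto (fun n => f n y) atTop
      (𝓝 (ENNReal.ofReal (1 / 4 * (v y ^ 2 * ‖y‖ ^ 2 * Kw N y)))) := fun y => by
    refine ENNReal.tendsto_ofReal ?_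
    have hE : Tendsto (fun n => etaw N (ε n) y) atTop (𝓝 1) := by
      have : Tendsto (fun n => 1 + ε n * ‖y‖ ^ 2) atTop (𝓝 (1 + 0 * ‖y‖ ^ 2)) :=
        (hlim.mul_const _).const_add _
      simpa [etaw] using this.inv₀ (by simp)
    have h1 : Tendsto (fun n => 1 / 4 - 2 * ε n) atTop (𝓝 (1 / 4 - 2 * 0)) :=
      (hlim.const_mul 2).const_sub _
    simpa using h1.mul (hE.const_mul (v y ^ 2 * ‖y‖ ^ 2 * Kw N y))
  have hfatou := lintegral_liminf_le (μ := (volume : Measure (Euc N))) (u := atTop) hmeas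
  simp only [(hpt _).liminf_eq] at hfatou
  have h4 : ∫⁻ y, ENNReal.ofReal (1 / 4 * (v y ^ 2 * ‖y‖ ^ 2 * Kw N y)) ≤
      4 * ∫⁻ y, ENNReal.ofReal (‖gradient v y‖ ^ 2 * Kw N y) := by
    refine hfatou.trans ?_
    refine liminf_le_of_le (by isBoundedDefault) fun b hb => ?_
    obtain ⟨n, hn⟩ := hb.exists
    exact hn.trans (main_eps (hε n) (hε' n) hdiff hL2 hH1)
  calc (∫⁻ y, ENNReal.ofReal (v y ^ 2 * ‖y‖ ^ 2 * Kw N y))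
      = ∫⁻ y, 4 * ENNReal.ofReal (1 / 4 * (v y ^ 2 * ‖y‖ ^ 2 * Kw N y)) := by
        refine lintegral_congr fun y => ?_
        rw [show (4 : ℝ≥0∞) = ENNReal.ofReal 4 by simp, ← ENNReal.ofReal_mul (by norm_num)]
        congr 1; ring
    _ = 4 * ∫⁻ y, ENNReal.ofReal (1 / 4 * (v y ^ 2 * ‖y‖ ^ 2 * Kw N y)) := by
        rw [lintegral_const_mul' _ _ (by simp)]
    _ ≤ 4 * (4 * ∫⁻ y, ENNReal.ofReal (‖gradient v y‖ ^ 2 * Kw N y)) := by gcongr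
    _ = _ := by rw [← mul_assoc]; norm_num
end
end

section
/- Let (Z,d) be a complete metric space and {S(t)}_{t≥0} a dynamical system on Z: each S(t) : Z → Z is continuous, S(0) = id, S(t+s) = S(t)∘S(s) for all t,s ≥ 0, and t ↦ S(t)z is continuous for each z ∈ Z. Assume: (1) for every z ∈ Z the trajectory {S(t)z : t ≥ 0} is relatively compact in Z; (2) there is a continuous function ψ : Z → ℝ with ψ(S(t)z) = ψ(z) for all t ≥ 0 and z ∈ Z; (3) there is a continuous function φ : ℝ → ℝ such that whenever z₁ ≠ z₂ and ψ(z₁) = ψ(z₂), the map t ↦ φ(d(S(t)z₁, S(t)z₂)) is strictly decreasing on [0,∞). Then for every M in the range of ψ there exists a unique z_M ∈ Z with S(t)z_M = z_M for all t ≥ 0 and ψ(z_M) = M; moreover, for every z ∈ Z with ψ(z) = M, S(t)z → z_M in Z as t → ∞. -/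
open Filter Topology

/-- Let `(Z,d)` be a complete metric space and `{S(t)}` a dynamical
system on `Z` with relatively compact trajectories, a continuous conserved quantity `ψ`,
and a continuous `φ : ℝ → ℝ` such that `t ↦ φ(d(S(t)z₁, S(t)z₂))` is strictly
decreasing on `[0,∞)` whenever `z₁ ≠ z₂` and `ψ(z₁) = ψ(z₂)`.  Then for every `M` in
the range of `ψ` there is a unique steady state `z_M` with `ψ(z_M) = M`, and every
trajectory starting at a point `z` with `ψ(z) = M` converges to `z_M`. -/
theorem stmt16 {Z : Type*} [MetricSpace Z] [CompleteSpace Z]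
    (S : ℝ → Z → Z)
    (hScont : ∀ t : ℝ, 0 ≤ t → Continuous (S t))
    (hS0 : S 0 = id)
    (hSadd : ∀ t : ℝ, 0 ≤ t → ∀ s : ℝ, 0 ≤ s → S (t + s) = S t ∘ S s)
    (horbcont : ∀ z : Z, ContinuousOn (fun t => S t z) (Set.Ici 0))
    (hcompact : ∀ z : Z, IsCompact (closure ((fun t => S t z) '' Set.Ici 0)))
    (ψ : Z → ℝ) (hψ : Continuous ψ)
    (hψinv : ∀ t : ℝ, 0 ≤ t → ∀ z, ψ (S t z) = ψ z)
    (φ : ℝ → ℝ) (hφ : Continuous φ)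
    (hdecr : ∀ z₁ z₂ : Z, z₁ ≠ z₂ → ψ z₁ = ψ z₂ →
      StrictAntiOn (fun t => φ (dist (S t z₁) (S t z₂))) (Set.Ici 0)) :
    ∀ M ∈ Set.range ψ,
      ∃ zM : Z,
        ((∀ t : ℝ, 0 ≤ t → S t zM = zM) ∧ ψ zM = M) ∧
        (∀ z' : Z, ((∀ t : ℝ, 0 ≤ t → S t z' = z') ∧ ψ z' = M) → z' = zM) ∧
        (∀ z : Z, ψ z = M → Tendsto (fun t => S t z) atTop (𝓝 zM)) := by
  have huniq : ∀ a b : Z, (∀ t : ℝ, 0 ≤ t → S t a = a) → (∀ t : ℝ, 0 ≤ t → S t b = b) →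
      ψ a = ψ b → a = b := by
    intro a b ha hb hab
    by_contra hne
    have h := hdecr a b hne hab (Set.mem_Ici.2 le_rfl) (Set.mem_Ici.2 zero_le_one) zero_lt_one
    simp only [ha 0 le_rfl, hb 0 le_rfl, ha 1 zero_le_one, hb 1 zero_le_one] at h
    exact lt_irrefl _ h
  have hclus : ∀ z y : Z, MapClusterPt y atTop (fun t => S t z) →
      (∀ t : ℝ, 0 ≤ t → S t y = y) ∧ ψ y = ψ z := by
    intro z y hy
    obtain ⟨U, hU, hUy⟩ := mapClusterPt_iff_ultrafilter.1 hy
    have hev : ∀ c : ℝ, ∀ᶠ t in (U : Filter ℝ), c ≤ t := fun c => hU (eventually_ge_atTop c)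
    have hψy : ψ y = ψ z := by
      have h1 : Tendsto (fun t => ψ (S t z)) U (𝓝 (ψ y)) := (hψ.tendsto y).comp hUy
      have h2 : Tendsto (fun t => ψ (S t z)) U (𝓝 (ψ z)) := by
        refine tendsto_const_nhds.congr' ?_
        filter_upwards [hev 0] with t ht
        exact (hψinv t ht z).symm
      exact tendsto_nhds_unique h1 h2
    -- shifted trajectories
    have hshift : ∀ r : ℝ, 0 ≤ r → Tendsto (fun t => S (t + r) z) U (𝓝 (S r y)) := by
      intro r hr
      have h1 : Tendsto (fun t => S r (S t z)) U (𝓝 (S r y)) := ((hScont r hr).tendsto y).comp hUy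
      refine h1.congr' ?_
      filter_upwards [hev 0] with t ht
      rw [add_comm, hSadd r hr t ht]; rfl
    refine ⟨fun s hs => ?_, hψy⟩
    by_cases hz : S s z = z
    · have h1 := hshift s hs
      refine tendsto_nhds_unique h1 (hUy.congr' ?_)
      filter_upwards [hev 0] with t ht
      rw [hSadd t ht s hs, Function.comp_apply, hz]
    · by_contra hne
      have hf := hdecr z (S s z) (Ne.symm hz) (hψinv s hs z).symm
      have hlt := hdecr y (S s y) (Ne.symm hne) (hψinv s hs y).symm
        (Set.mem_Ici.2 le_rfl) (Set.mem_Ici.2 zero_le_one) zero_lt_one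
      have hlim : ∀ r : ℝ, 0 ≤ r →
          Tendsto (fun t => φ (dist (S (t + r) z) (S (t + r) (S s z)))) U
            (𝓝 (φ (dist (S r y) (S r (S s y))))) := by
        intro r hr
        refine (hφ.tendsto _).comp ((hshift r hr).dist ?_)
        have h1 := hshift (r + s) (add_nonneg hr hs)
        rw [hSadd r hr s hs] at h1
        refine h1.congr' ?_
        filter_upwards [hev 0] with t ht
        rw [← add_assoc, hSadd (t + r) (add_nonneg ht hr) s hs]; rfl
      have hle : ∀ t0 : ℝ, 0 ≤ t0 → φ (dist (S 0 y) (S 0 (S s y))) ≤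
          φ (dist (S t0 z) (S t0 (S s z))) := by
        intro t0 ht0
        refine le_of_tendsto (hlim 0 le_rfl) ?_
        filter_upwards [hev t0] with t ht
        rw [add_zero]
        exact hf.antitoneOn (Set.mem_Ici.2 ht0) (Set.mem_Ici.2 (ht0.trans ht)) ht
      have hge := ge_of_tendsto (hlim 1 zero_le_one)
        ((hev 0).mono fun t ht => hle (t + 1) (add_nonneg ht zero_le_one))
      exact absurd hlt (not_lt.2 hge)
  have hmem : ∀ z : Z, ∀ᶠ t in (atTop : Filter ℝ),
      S t z ∈ closure ((fun t => S t z) '' Set.Ici 0) := by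
    intro z
    filter_upwards [eventually_ge_atTop 0] with t ht
    exact subset_closure ⟨t, ht, rfl⟩
  rintro M ⟨z0, rfl⟩
  obtain ⟨y, -, hy⟩ := (hcompact z0).exists_mapClusterPt_of_frequently (hmem z0).frequently
  obtain ⟨hfix, hψy⟩ := hclus z0 y hy
  refine ⟨y, ⟨hfix, hψy⟩, fun z' h => huniq z' y h.1 hfix (h.2.trans hψy.symm), fun z hz => ?_⟩
  refine (hcompact z).tendsto_nhds_of_unique_mapClusterPt (hmem z) fun x _ hx => ?_
  obtain ⟨h1, h2⟩ := hclus z x hx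
  exact huniq x y h1 hfix (h2.trans (hz.trans hψy.symm))
end
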